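/- Assume 0 ≤ α < N, p > 0, ρ > 0, that the Dirichlet eigenpair hypothesis holds for (Ω, λ₁, φ), that μ ≤ C_{H,Ω}, and that q satisfies (q − 1)·|γ_*| > max{0, 2 − α} (equivalently, q > 1 + max{0, (2−α)/|γ_*|}). Then the inequality (E): −Δu − μ|x|^{−2}u ≥ (|x|^{−α} * u^p) u^q has a positive solution in C_Ω^ρ if and only if p·|γ_*| > N − α and (p + q − 1)·|γ_*| > N − α + 2. -/

import Mathlib

open MeasureTheory Real Set
open scoped ENNReal NNReal

noncomputable section

/-- Euclidean space `ℝ^N`. -/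
abbrev Euc (N : ℕ) := EuclideanSpace ℝ (Fin N)

/-- The Euclidean Laplacian `Δu(x) = ∑ ∂²u/∂xᵢ²(x)`, the trace of the Hessian. -/
def lap (N : ℕ) (u : Euc N → ℝ) (x : Euc N) : ℝ :=
  ∑ i : Fin N,
    iteratedFDeriv ℝ 2 u x ![EuclideanSpace.single i 1, EuclideanSpace.single i 1]

/-- The open cone `C_Ω^ρ = {x : |x| > ρ, x/|x| ∈ Ω}`. -/
def coneGT (N : ℕ) (ρ : ℝ) (Ω : Set (Euc N)) : Set (Euc N) :=
  {x | ρ < ‖x‖ ∧ ‖x‖⁻¹ • x ∈ Ω}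

/-- The full open cone `C_Ω = {x ≠ 0 : x/|x| ∈ Ω}`. -/
def cone (N : ℕ) (Ω : Set (Euc N)) : Set (Euc N) :=
  {x | x ≠ 0 ∧ ‖x‖⁻¹ • x ∈ Ω}

/-- `Ω` is a nonempty, connected, relatively open subset of the unit sphere `S^{N-1}`. -/
def IsConeDomain (N : ℕ) (Ω : Set (Euc N)) : Prop :=
  Ω ⊆ Metric.sphere (0 : Euc N) 1 ∧ IsConnected Ω ∧
    IsOpen {ω : Metric.sphere (0 : Euc N) 1 | (ω : Euc N) ∈ Ω}

/-- The convolution `(|x|^{-α} * f)(x) = ∫_{C_Ω^ρ} f(y)|x-y|^{-α} dy`, valued in `[0,∞]`. -/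
def rieszConv (N : ℕ) (α ρ : ℝ) (Ω : Set (Euc N)) (f : Euc N → ℝ) (x : Euc N) : ℝ≥0∞ :=
  ∫⁻ y in coneGT N ρ Ω, ENNReal.ofReal (f y * ‖x - y‖ ^ (-α))

/-- Dirichlet eigenpair hypothesis for `(Ω, λ₁, φ)`: `φ` is continuous on the closure of `Ω`,
positive on `Ω`, vanishing on the relative boundary, with maximum `1`, and its 0-homogeneous
extension `Φ(x) = φ(x/|x|)` is `C²` on the open cone and satisfies `ΔΦ = -λ₁|x|⁻²Φ`. -/
structure DirichletEigenpair (N : ℕ) (Ω : Set (Euc N)) (lam1 : ℝ) (φ : Euc N → ℝ) : Prop where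
  contOn : ContinuousOn φ (closure Ω)
  pos : ∀ ω ∈ Ω, 0 < φ ω
  bdryZero : ∀ ω ∈ closure Ω \ Ω, φ ω = 0
  le_one : ∀ ω ∈ closure Ω, φ ω ≤ 1
  max_one : ∃ ω ∈ closure Ω, φ ω = 1
  smoothExt : ContDiffOn ℝ 2 (fun x => φ (‖x‖⁻¹ • x)) (cone N Ω)
  eigen : ∀ x ∈ cone N Ω,
    lap N (fun y => φ (‖y‖⁻¹ • y)) x = -lam1 * ‖x‖ ^ (-(2:ℝ)) * φ (‖x‖⁻¹ • x)

/-- The Hardy constant `C_{H,Ω} = λ₁ + ((N-2)/2)²`. -/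
def CHconst (N : ℕ) (lam1 : ℝ) : ℝ := lam1 + (((N : ℝ) - 2) / 2) ^ 2

/-- The smaller root `γ_*` of `γ(γ + N - 2) = λ₁ - μ`. -/
def gammaStar (N : ℕ) (lam1 μ : ℝ) : ℝ :=
  (-((N : ℝ) - 2) - Real.sqrt (((N : ℝ) - 2) ^ 2 + 4 * (lam1 - μ))) / 2

/-- A positive (classical) solution of `(E) : -Δu - μ|x|⁻²u ≥ (|x|^{-α} * uᵖ) u^q` in `C_Ω^ρ`. -/
def IsPosSolE (N : ℕ) (ρ μ α p q : ℝ) (Ω : Set (Euc N)) (u : Euc N → ℝ) : Prop :=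
  ContDiffOn ℝ 2 u (coneGT N ρ Ω) ∧
  ContinuousOn u (closure (coneGT N ρ Ω)) ∧
  (∀ x ∈ coneGT N ρ Ω, 0 < u x) ∧
  (∀ x ∈ coneGT N ρ Ω, rieszConv N α ρ Ω (fun y => u y ^ p) x < ⊤) ∧
  (∀ x ∈ coneGT N ρ Ω,
    (rieszConv N α ρ Ω (fun y => u y ^ p) x).toReal * u x ^ q ≤
      -lap N u x - μ * ‖x‖ ^ (-(2:ℝ)) * u x)

/-- A positive solution of `(Z) : -Δu - μ|x|⁻²u ≥ (∫_{C_Ω^ρ} uᵖ) u^q` in `C_Ω^ρ`. -/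
def IsPosSolZ (N : ℕ) (ρ μ p q : ℝ) (Ω : Set (Euc N)) (u : Euc N → ℝ) : Prop :=
  ContDiffOn ℝ 2 u (coneGT N ρ Ω) ∧
  ContinuousOn u (closure (coneGT N ρ Ω)) ∧
  (∀ x ∈ coneGT N ρ Ω, 0 < u x) ∧
  (∫⁻ y in coneGT N ρ Ω, ENNReal.ofReal (u y ^ p)) < ⊤ ∧
  (∀ x ∈ coneGT N ρ Ω,
    (∫⁻ y in coneGT N ρ Ω, ENNReal.ofReal (u y ^ p)).toReal * u x ^ q ≤
      -lap N u x - μ * ‖x‖ ^ (-(2:ℝ)) * u x)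

/-- A positive solution `(u, v)` of the system `(S)` in `C_Ω^ρ`. -/
def IsPosSolS (N : ℕ) (ρ μ α p q s : ℝ) (Ω : Set (Euc N)) (u v : Euc N → ℝ) : Prop :=
  ContDiffOn ℝ 2 u (coneGT N ρ Ω) ∧ ContinuousOn u (closure (coneGT N ρ Ω)) ∧
  ContDiffOn ℝ 2 v (coneGT N ρ Ω) ∧ ContinuousOn v (closure (coneGT N ρ Ω)) ∧
  (∀ x ∈ coneGT N ρ Ω, 0 < u x) ∧ (∀ x ∈ coneGT N ρ Ω, 0 < v x) ∧
  (∀ x ∈ coneGT N ρ Ω, rieszConv N α ρ Ω (fun y => v y ^ p) x < ⊤) ∧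
  (∀ x ∈ coneGT N ρ Ω,
    (rieszConv N α ρ Ω (fun y => v y ^ p) x).toReal * v x ^ q ≤
      -lap N u x - μ * ‖x‖ ^ (-(2:ℝ)) * u x) ∧
  (∀ x ∈ coneGT N ρ Ω, u x ^ s ≤ -lap N v x - μ * ‖x‖ ^ (-(2:ℝ)) * v x)

open MeasureTheory Real Set
open scoped ENNReal NNReal
noncomputable section

/-- second derivative along `e` via the line -/
theorem iter2_line {N : ℕ} {u : Euc N → ℝ} {x : Euc N} (hu : ContDiffAt ℝ 2 u x) (e : Euc N) :
    iteratedFDeriv ℝ 2 u x ![e, e] = deriv (deriv (fun s : ℝ => u (x + s • e))) 0 := by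
  rw [iteratedFDeriv_two_apply]
  simp only [Matrix.cons_val_zero, Matrix.cons_val_one]
  have h1 : ∀ᶠ y in nhds x, DifferentiableAt ℝ u y := by
    have := hu.eventually (by simp)
    filter_upwards [this] with y hy
    exact hy.differentiableAt (by norm_num)
  have hl : Filter.Tendsto (fun s : ℝ => x + s • e) (nhds 0) (nhds x) := by
    have : Continuous (fun s : ℝ => x + s • e) := by fun_prop
    simpa using this.tendsto 0
  have hld : ∀ s : ℝ, HasDerivAt (fun s : ℝ => x + s • e) e s := by
    intro s
    simpa using ((hasDerivAt_id s).smul_const e).const_add x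
  have h2 : deriv (fun s : ℝ => u (x + s • e)) =ᶠ[nhds 0] fun s => fderiv ℝ u (x + s • e) e := by
    filter_upwards [hl.eventually h1] with s hs
    exact (hs.hasFDerivAt.comp_hasDerivAt s (hld s)).deriv
  rw [h2.deriv_eq]
  have h3 : DifferentiableAt ℝ (fderiv ℝ u) x :=
    (hu.fderiv_right (m := 1) (by norm_num)).differentiableAt (by norm_num)
  have h4 : HasDerivAt (fun s : ℝ => fderiv ℝ u (x + s • e)) (fderiv ℝ (fderiv ℝ u) x e) 0 := by
    have h3' : HasFDerivAt (fderiv ℝ u) (fderiv ℝ (fderiv ℝ u) x) (x + (0:ℝ) • e) := by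
      simpa using h3.hasFDerivAt
    exact h3'.comp_hasDerivAt (0:ℝ) (hld 0)
  have h5 := h4.clm_apply (hasDerivAt_const (0:ℝ) e)
  simpa using h5.deriv.symm

theorem line_contDiffAt {N : ℕ} {u : Euc N → ℝ} {x : Euc N} (hu : ContDiffAt ℝ 2 u x) (e : Euc N) :
    ContDiffAt ℝ 2 (fun s : ℝ => u (x + s • e)) 0 := by
  have : ContDiffAt ℝ 2 u (x + (0:ℝ) • e) := by simpa using hu
  exact this.comp (0:ℝ) (by fun_prop)

theorem line_deriv {N : ℕ} {u : Euc N → ℝ} {x : Euc N} (hu : DifferentiableAt ℝ u x) (e : Euc N) :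
    deriv (fun s : ℝ => u (x + s • e)) 0 = fderiv ℝ u x e := by
  have h0 : HasFDerivAt u (fderiv ℝ u x) (x + (0:ℝ) • e) := by simpa using hu.hasFDerivAt
  have hld : HasDerivAt (fun s : ℝ => x + s • e) e 0 := by
    simpa using ((hasDerivAt_id (0:ℝ)).smul_const e).const_add x
  exact (h0.comp_hasDerivAt (0:ℝ) hld).deriv

theorem d2_data {f : ℝ → ℝ} {t : ℝ} (hf : ContDiffAt ℝ 2 f t) :
    (∀ᶠ s in nhds t, DifferentiableAt ℝ f s) ∧ DifferentiableAt ℝ (deriv f) t := by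
  constructor
  · have := hf.eventually (by simp)
    filter_upwards [this] with y hy
    exact hy.differentiableAt (by norm_num)
  · have h : ContDiffAt ℝ 1 (deriv f) t := by
      have h1 : ContDiffAt ℝ 1 (fderiv ℝ f) t := hf.fderiv_right (m := 1) (by norm_num)
      have : deriv f = fun s => fderiv ℝ f s 1 := by ext s; simp
      rw [this]
      exact h1.clm_apply contDiffAt_const
    exact h.differentiableAt (by norm_num)

theorem d2_mul {f g : ℝ → ℝ} {t : ℝ} (hf : ContDiffAt ℝ 2 f t) (hg : ContDiffAt ℝ 2 g t) :
    deriv (deriv (fun s => f s * g s)) t =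
      deriv (deriv f) t * g t + 2 * (deriv f t * deriv g t) + f t * deriv (deriv g) t := by
  obtain ⟨hf1, hf2⟩ := d2_data hf
  obtain ⟨hg1, hg2⟩ := d2_data hg
  have : deriv (fun s => f s * g s) =ᶠ[nhds t] fun s => deriv f s * g s + f s * deriv g s := by
    filter_upwards [hf1, hg1] with s h1 h2
    exact deriv_fun_mul h1 h2
  rw [this.deriv_eq]
  have h := (hf2.hasDerivAt.mul hg1.self_of_nhds.hasDerivAt).add
    (hf1.self_of_nhds.hasDerivAt.mul hg2.hasDerivAt)
  exact h.deriv.trans (by ring)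

theorem d2_comp {f g : ℝ → ℝ} {t : ℝ} (hf : ContDiffAt ℝ 2 f (g t)) (hg : ContDiffAt ℝ 2 g t) :
    deriv (deriv (fun s => f (g s))) t =
      deriv (deriv f) (g t) * (deriv g t) ^ 2 + deriv f (g t) * deriv (deriv g) t := by
  obtain ⟨hf1, hf2⟩ := d2_data hf
  obtain ⟨hg1, hg2⟩ := d2_data hg
  have hgt := hg.continuousAt
  have : deriv (fun s => f (g s)) =ᶠ[nhds t] fun s => deriv f (g s) * deriv g s := by
    filter_upwards [hgt.eventually hf1, hg1] with s h1 h2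
    exact (h1.hasDerivAt.comp s h2.hasDerivAt).deriv
  rw [this.deriv_eq]
  have h := (hf2.hasDerivAt.comp t hg1.self_of_nhds.hasDerivAt).mul hg2.hasDerivAt
  exact h.deriv.trans (by simp only [Function.comp]; ring)

theorem d1_comp {f g : ℝ → ℝ} {t : ℝ} (hf : ContDiffAt ℝ 2 f (g t)) (hg : ContDiffAt ℝ 2 g t) :
    deriv (fun s => f (g s)) t = deriv f (g t) * deriv g t :=
  ((hf.differentiableAt (by norm_num)).hasDerivAt.comp t
    (hg.differentiableAt (by norm_num)).hasDerivAt).deriv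

/-- The Laplacian via lines. -/
theorem lap_line {N : ℕ} {u : Euc N → ℝ} {x : Euc N} (hu : ContDiffAt ℝ 2 u x) :
    lap N u x = ∑ i : Fin N,
      deriv (deriv (fun s : ℝ => u (x + s • EuclideanSpace.single i 1))) 0 := by
  unfold lap
  exact Finset.sum_congr rfl fun i _ => iter2_line hu _

theorem lap_congr {N : ℕ} {u v : Euc N → ℝ} {x : Euc N} (h : u =ᶠ[nhds x] v) :
    lap N u x = lap N v x := by
  unfold lap
  refine Finset.sum_congr rfl fun i _ => ?_
  rw [(Filter.EventuallyEq.iteratedFDeriv ℝ h 2).eq_of_nhds]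

theorem lap_const_mul {N : ℕ} {u : Euc N → ℝ} {x : Euc N} (hu : ContDiffAt ℝ 2 u x) (c : ℝ) :
    lap N (fun y => c * u y) x = c * lap N u x := by
  rw [lap_line hu, lap_line (contDiffAt_const.mul hu), Finset.mul_sum]
  refine Finset.sum_congr rfl fun i _ => ?_
  rw [d2_mul (f := fun _ => c) contDiffAt_const (line_contDiffAt hu _)]
  simp

theorem lap_add {N : ℕ} {u v : Euc N → ℝ} {x : Euc N} (hu : ContDiffAt ℝ 2 u x)
    (hv : ContDiffAt ℝ 2 v x) :
    lap N (fun y => u y + v y) x = lap N u x + lap N v x := by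
  unfold lap
  rw [← Finset.sum_add_distrib]
  refine Finset.sum_congr rfl fun i _ => ?_
  have := iteratedFDeriv_add_apply (𝕜 := ℝ) (i := 2) (x := x) (f := u) (g := v) (by exact_mod_cast hu) (by exact_mod_cast hv)
  have h2 : (fun y => u y + v y) = u + v := rfl
  rw [h2, this]; rfl

/-- log norm derivative data -/
theorem logn_contDiffAt {N : ℕ} {x : Euc N} (hx : x ≠ 0) :
    ContDiffAt ℝ 2 (fun y : Euc N => Real.log ‖y‖) x :=
  (contDiffAt_norm ℝ hx).log (by simpa using hx)

theorem logn_d {N : ℕ} {x : Euc N} (hx : x ≠ 0) (i : Fin N) :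
    deriv (fun s : ℝ => Real.log ‖x + s • EuclideanSpace.single i (1:ℝ)‖) 0 = x i / ‖x‖ ^ 2 ∧
    deriv (deriv (fun s : ℝ => Real.log ‖x + s • EuclideanSpace.single i (1:ℝ)‖)) 0 =
      1 / ‖x‖ ^ 2 - 2 * (x i) ^ 2 / (‖x‖ ^ 2) ^ 2 := by
  set e : Euc N := EuclideanSpace.single i (1:ℝ) with he
  have hpos : 0 < ‖x‖ ^ 2 := by positivity
  have hn : ∀ s : ℝ, ‖x + s • e‖ ^ 2 = ‖x‖ ^ 2 + 2 * x i * s + s ^ 2 := by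
    intro s
    rw [norm_add_sq_real, norm_smul, inner_smul_right]
    have : inner ℝ x e = x i := by
      rw [he]; simp [EuclideanSpace.inner_single_right]
    rw [this]
    have h1 : ‖e‖ = 1 := by rw [he]; simp
    rw [h1]; simp; ring
  have hf : (fun s : ℝ => Real.log ‖x + s • e‖) =
      fun s => (1/2) * Real.log (‖x‖ ^ 2 + 2 * x i * s + s ^ 2) := by
    ext s
    rw [← hn, Real.log_pow]; push_cast; ring
  have hd : ∀ s : ℝ, HasDerivAt (fun s : ℝ => ‖x‖ ^ 2 + 2 * x i * s + s ^ 2) (2 * x i + 2 * s) s := by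
    intro s
    have := (((hasDerivAt_id s).const_mul (2 * x i)).const_add (‖x‖^2)).add ((hasDerivAt_id s).pow 2)
    refine (this.congr_deriv ?_).congr_of_eventuallyEq (Filter.Eventually.of_forall fun y => ?_)
    · simp
    · simp
  have hev : ∀ᶠ s in nhds (0:ℝ), ‖x‖ ^ 2 + 2 * x i * s + s ^ 2 ≠ 0 := by
    have : ContinuousAt (fun s : ℝ => ‖x‖ ^ 2 + 2 * x i * s + s ^ 2) 0 := by fun_prop
    exact this.eventually_ne (by simpa using hx)
  have hd1 : deriv (fun s : ℝ => Real.log ‖x + s • e‖) =ᶠ[nhds 0]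
      fun s => (x i + s) / (‖x‖ ^ 2 + 2 * x i * s + s ^ 2) := by
    rw [hf]
    filter_upwards [hev] with s hs
    have := ((hd s).log hs).const_mul (1/2)
    rw [this.deriv]; field_simp
  constructor
  · rw [hd1.self_of_nhds]; simp
  · rw [hd1.deriv_eq]
    have h := (((hasDerivAt_id (0:ℝ)).const_add (x i)).div (hd 0) (by simpa using hx))
    refine h.deriv.trans ?_
    simp
    field_simp

end

open MeasureTheory Real Set
open scoped ENNReal NNReal
noncomputable section

/-- The 0-homogeneous extension. -/
def bigPhi {N : ℕ} (φ : Euc N → ℝ) (x : Euc N) : ℝ := φ (‖x‖⁻¹ • x)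

theorem isOpen_cone {N : ℕ} {Ω : Set (Euc N)} (hΩ : IsConeDomain N Ω) : IsOpen (cone N Ω) := by
  obtain ⟨h1, -, h3⟩ := hΩ
  have h0 : IsOpen {x : Euc N | x ≠ 0} := isOpen_ne
  obtain ⟨O, hO, hO2⟩ := isOpen_induced_iff.1 h3
  have : cone N Ω = {x : Euc N | x ≠ 0} ∩ (fun x : Euc N => ‖x‖⁻¹ • x) ⁻¹' O := by
    ext x
    simp only [cone, mem_ofPred_eq, mem_inter_iff, mem_preimage]
    refine and_congr_right fun hx => ?_
    have hs : ‖x‖⁻¹ • x ∈ Metric.sphere (0 : Euc N) 1 := by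
      simp [norm_smul, hx]
    have := Set.ext_iff.1 hO2 ⟨_, hs⟩
    simp only [mem_preimage, mem_ofPred_eq] at this
    exact this.symm
  rw [this]
  refine ContinuousOn.isOpen_inter_preimage ?_ h0 hO
  intro x hx
  have : ‖x‖ ≠ 0 := by simpa using hx
  exact (ContinuousAt.smul (continuous_norm.continuousAt.inv₀ this) continuousAt_id).continuousWithinAt

theorem coneGT_eq {N : ℕ} {Ω : Set (Euc N)} {ρ : ℝ} (hρ : 0 < ρ) :
    coneGT N ρ Ω = cone N Ω ∩ {x | ρ < ‖x‖} := by
  ext x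
  simp only [coneGT, cone, mem_ofPred_eq, mem_inter_iff]
  constructor
  · rintro ⟨h1, h2⟩
    refine ⟨⟨?_, h2⟩, h1⟩
    rintro rfl
    simp at h1; linarith
  · rintro ⟨⟨_, h2⟩, h1⟩
    exact ⟨h1, h2⟩

theorem isOpen_coneGT {N : ℕ} {Ω : Set (Euc N)} {ρ : ℝ} (hρ : 0 < ρ) (hΩ : IsConeDomain N Ω) :
    IsOpen (coneGT N ρ Ω) := by
  rw [coneGT_eq hρ]
  exact (isOpen_cone hΩ).inter (isOpen_lt continuous_const continuous_norm)

theorem coneGT_sub {N : ℕ} {Ω : Set (Euc N)} {ρ : ℝ} (hρ : 0 < ρ) :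
    coneGT N ρ Ω ⊆ cone N Ω := by
  rw [coneGT_eq hρ]; exact inter_subset_left

theorem coneGT_mono {N : ℕ} {Ω : Set (Euc N)} {ρ ρ' : ℝ} (h : ρ ≤ ρ') :
    coneGT N ρ' Ω ⊆ coneGT N ρ Ω := fun _ hx => ⟨h.trans_lt hx.1, hx.2⟩

section
variable {N : ℕ} {Ω : Set (Euc N)} {lam1 : ℝ} {φ : Euc N → ℝ}

theorem bigPhi_contDiffAt (hΩ : IsConeDomain N Ω) (hphi : DirichletEigenpair N Ω lam1 φ)
    {x : Euc N} (hx : x ∈ cone N Ω) : ContDiffAt ℝ 2 (bigPhi φ) x :=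
  hphi.smoothExt.contDiffAt ((isOpen_cone hΩ).mem_nhds hx)

theorem bigPhi_pos (hphi : DirichletEigenpair N Ω lam1 φ)
    {x : Euc N} (hx : x ∈ cone N Ω) : 0 < bigPhi φ x := hphi.pos _ hx.2

theorem bigPhi_le (hphi : DirichletEigenpair N Ω lam1 φ)
    {x : Euc N} (hx : x ∈ cone N Ω) : bigPhi φ x ≤ 1 := hphi.le_one _ (subset_closure hx.2)

theorem bigPhi_lap (hphi : DirichletEigenpair N Ω lam1 φ)
    {x : Euc N} (hx : x ∈ cone N Ω) : lap N (bigPhi φ) x = -lam1 / ‖x‖ ^ 2 * bigPhi φ x := by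
  have := hphi.eigen x hx
  rw [Real.rpow_neg (norm_nonneg _)] at this
  rw [show (2:ℝ) = ((2:ℕ):ℝ) by norm_num, Real.rpow_natCast] at this
  exact this.trans (by simp only [bigPhi]; ring)

theorem fderiv_bigPhi_self (hΩ : IsConeDomain N Ω) (hphi : DirichletEigenpair N Ω lam1 φ)
    {x : Euc N} (hx : x ∈ cone N Ω) : fderiv ℝ (bigPhi φ) x x = 0 := by
  have hd := (bigPhi_contDiffAt hΩ hphi hx).differentiableAt (by norm_num)
  rw [← line_deriv hd x]
  have : (fun s : ℝ => bigPhi φ (x + s • x)) =ᶠ[nhds 0] fun _ => bigPhi φ x := by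
    have h : ∀ᶠ s in nhds (0:ℝ), -1 < s := lt_mem_nhds (by norm_num)
    filter_upwards [h] with s hs
    have h1 : (0:ℝ) < 1 + s := by linarith
    have h2 : x + s • x = (1 + s) • x := by rw [add_smul, one_smul]
    have h3 : ‖x‖ ≠ 0 := by simpa using hx.1
    unfold bigPhi
    rw [h2, norm_smul, smul_smul, Real.norm_of_nonneg h1.le]
    congr 2
    field_simp
  rw [this.deriv_eq]; simp

theorem sum_coord_fderiv (f : Euc N →L[ℝ] ℝ) (x : Euc N) :
    ∑ i : Fin N, x i * f (EuclideanSpace.single i 1) = f x := by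
  have h : x = ∑ i : Fin N, x i • (EuclideanSpace.single i (1:ℝ) : Euc N) := by
    have := (EuclideanSpace.basisFun (Fin N) ℝ).sum_repr x
    simpa using this.symm
  conv_rhs => rw [h]
  simp [map_sum]

theorem GPhi_contDiffAt (hΩ : IsConeDomain N Ω) (hphi : DirichletEigenpair N Ω lam1 φ)
    {x : Euc N} (hx : x ∈ cone N Ω) {G η : ℝ → ℝ} (hG : ContDiffAt ℝ 2 G (Real.log ‖x‖))
    (hη : ContDiffAt ℝ 2 η (bigPhi φ x)) :
    ContDiffAt ℝ 2 (fun y => G (Real.log ‖y‖) * η (bigPhi φ y)) x :=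
  (hG.comp x (logn_contDiffAt hx.1)).mul (hη.comp x (bigPhi_contDiffAt hΩ hphi hx))

theorem lap_GPhi (hΩ : IsConeDomain N Ω) (hphi : DirichletEigenpair N Ω lam1 φ)
    {x : Euc N} (hx : x ∈ cone N Ω) {G η : ℝ → ℝ} (hG : ContDiffAt ℝ 2 G (Real.log ‖x‖))
    (hη : ContDiffAt ℝ 2 η (bigPhi φ x)) :
    ∃ Q : ℝ, 0 ≤ Q ∧ lap N (fun y => G (Real.log ‖y‖) * η (bigPhi φ y)) x =
      (deriv (deriv G) (Real.log ‖x‖) + (N - 2) * deriv G (Real.log ‖x‖)) / ‖x‖ ^ 2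
          * η (bigPhi φ x) +
        G (Real.log ‖x‖) * (deriv (deriv η) (bigPhi φ x) * Q
          + deriv η (bigPhi φ x) * (-lam1 / ‖x‖ ^ 2 * bigPhi φ x)) := by
  have hP := bigPhi_contDiffAt hΩ hphi hx
  have hL := logn_contDiffAt hx.1
  have hn : ‖x‖ ≠ 0 := by simpa using hx.1
  refine ⟨∑ i : Fin N, (fderiv ℝ (bigPhi φ) x (EuclideanSpace.single i 1)) ^ 2,
    Finset.sum_nonneg fun i _ => sq_nonneg _, ?_⟩
  rw [lap_line (GPhi_contDiffAt hΩ hphi hx hG hη), ← bigPhi_lap hphi hx, lap_line hP]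
  have key : ∀ i : Fin N, deriv (deriv (fun s : ℝ =>
      G (Real.log ‖x + s • (EuclideanSpace.single i 1 : Euc N)‖) * η (bigPhi φ (x + s • (EuclideanSpace.single i 1 : Euc N))))) 0 =
      (deriv (deriv G) (Real.log ‖x‖) * (x i) ^ 2 / (‖x‖ ^ 2) ^ 2 +
        deriv G (Real.log ‖x‖) * (1 / ‖x‖ ^ 2 - 2 * (x i) ^ 2 / (‖x‖ ^ 2) ^ 2)) * η (bigPhi φ x)
      + 2 * deriv G (Real.log ‖x‖) / ‖x‖ ^ 2 * deriv η (bigPhi φ x) *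
        (x i * fderiv ℝ (bigPhi φ) x (EuclideanSpace.single i 1))
      + G (Real.log ‖x‖) * (deriv (deriv η) (bigPhi φ x) *
          (fderiv ℝ (bigPhi φ) x (EuclideanSpace.single i 1)) ^ 2
          + deriv η (bigPhi φ x) *
          deriv (deriv (fun s : ℝ => bigPhi φ (x + s • EuclideanSpace.single i 1))) 0) := by
    intro i
    obtain ⟨hl1, hl2⟩ := logn_d hx.1 i
    have hLl := line_contDiffAt hL (EuclideanSpace.single i (1:ℝ))
    have hPl := line_contDiffAt hP (EuclideanSpace.single i (1:ℝ))
    have hG' : ContDiffAt ℝ 2 G ((fun s : ℝ => Real.log ‖x + s • (EuclideanSpace.single i (1:ℝ) : Euc N)‖) 0) := by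
      simpa using hG
    have hη' : ContDiffAt ℝ 2 η ((fun s : ℝ => bigPhi φ (x + s • (EuclideanSpace.single i (1:ℝ) : Euc N))) 0) := by
      simpa using hη
    rw [d2_mul (f := fun s : ℝ => G (Real.log ‖x + s • (EuclideanSpace.single i (1:ℝ) : Euc N)‖))
      (g := fun s : ℝ => η (bigPhi φ (x + s • (EuclideanSpace.single i (1:ℝ) : Euc N))))
      (hG'.comp (0:ℝ) hLl) (hη'.comp (0:ℝ) hPl)]
    rw [d2_comp (f := G) (g := fun s : ℝ => Real.log ‖x + s • (EuclideanSpace.single i (1:ℝ) : Euc N)‖) hG' hLl,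
      d2_comp (f := η) (g := fun s : ℝ => bigPhi φ (x + s • (EuclideanSpace.single i (1:ℝ) : Euc N))) hη' hPl,
      d1_comp (f := G) (g := fun s : ℝ => Real.log ‖x + s • (EuclideanSpace.single i (1:ℝ) : Euc N)‖) hG' hLl,
      d1_comp (f := η) (g := fun s : ℝ => bigPhi φ (x + s • (EuclideanSpace.single i (1:ℝ) : Euc N))) hη' hPl, hl1, hl2,
      line_deriv (hP.differentiableAt (by norm_num))]
    simp only [zero_smul, add_zero]
    ring
  rw [Finset.sum_congr rfl fun i _ => key i]
  rw [Finset.sum_add_distrib, Finset.sum_add_distrib, ← Finset.sum_mul, ← Finset.mul_sum,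
    sum_coord_fderiv, fderiv_bigPhi_self hΩ hphi hx, ← Finset.mul_sum, Finset.sum_add_distrib,
    Finset.sum_add_distrib, ← Finset.mul_sum, ← Finset.mul_sum, ← Finset.mul_sum,
    Finset.sum_sub_distrib, ← Finset.sum_div, ← Finset.sum_div, ← Finset.mul_sum, ← Finset.sum_div, ← Finset.mul_sum]
  have hsum : ∑ i : Fin N, (x i) ^ 2 = ‖x‖ ^ 2 := by
    rw [EuclideanSpace.norm_sq_eq]; simp
  rw [hsum]
  simp only [Finset.sum_const, Finset.card_univ, Fintype.card_fin, nsmul_eq_mul]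
  field_simp
  ring

/-- pure power times Φ -/
theorem rpow_eq_exp_log {a : ℝ} {x : Euc N} (hx : x ≠ 0) : ‖x‖ ^ a = Real.exp (a * Real.log ‖x‖) := by
  rw [Real.rpow_def_of_pos (by simpa using hx)]; ring_nf

theorem rpowPhi_contDiffAt (hΩ : IsConeDomain N Ω) (hphi : DirichletEigenpair N Ω lam1 φ)
    {x : Euc N} (hx : x ∈ cone N Ω) (a : ℝ) :
    ContDiffAt ℝ 2 (fun y : Euc N => ‖y‖ ^ a * bigPhi φ y) x := by
  have hn : ‖x‖ ≠ 0 := by simpa using hx.1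
  exact ((contDiffAt_norm ℝ hx.1).rpow_const_of_ne hn).mul (bigPhi_contDiffAt hΩ hphi hx)

theorem lap_rpowPhi (hΩ : IsConeDomain N Ω) (hphi : DirichletEigenpair N Ω lam1 φ)
    {x : Euc N} (hx : x ∈ cone N Ω) (a : ℝ) :
    lap N (fun y => ‖y‖ ^ a * bigPhi φ y) x =
      (a * (a + (N - 2)) - lam1) / ‖x‖ ^ 2 * (‖x‖ ^ a * bigPhi φ x) := by
  have hev : (fun y => ‖y‖ ^ a * bigPhi φ y) =ᶠ[nhds x]
      fun y => (fun s => Real.exp (a * s)) (Real.log ‖y‖) * id (bigPhi φ y) := by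
    filter_upwards [isOpen_ne.mem_nhds hx.1] with y hy
    simp only [id]
    rw [rpow_eq_exp_log hy]
  rw [lap_congr hev]
  obtain ⟨Q, -, hQ⟩ := lap_GPhi hΩ hphi hx (G := fun s => Real.exp (a * s)) (η := id)
    (by fun_prop) (contDiffAt_id)
  rw [hQ]
  have hd : ∀ c : ℝ, deriv (fun s => c * Real.exp (a * s)) = fun s => (c * a) * Real.exp (a * s) := by
    intro c
    ext s
    have := ((((hasDerivAt_id s).const_mul a).exp).const_mul c).deriv
    simp only [id] at this
    rw [this]; ring
  have hd1 : deriv (fun s => Real.exp (a * s)) = fun s => a * Real.exp (a * s) := by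
    have := hd 1; simpa using this
  have hn : ‖x‖ ≠ 0 := by simpa using hx.1
  rw [hd1, hd a, rpow_eq_exp_log hx.1]
  have : deriv (id : ℝ → ℝ) = fun _ => 1 := by ext; simp
  rw [this]
  simp only [id, deriv_const]
  field_simp
  ring

end

/-- The harmonic-mean combination. -/
theorem harm_alg {a b a1 b1 a2 b2 c c1 c2 : ℝ} (ha : 0 < a) (hb : 0 < b)
    (h0 : c * (a + b) = a * b)
    (h1 : c1 * (a + b) + c * (a1 + b1) = a1 * b + a * b1)
    (h2 : c2 * (a + b) + 2 * (c1 * (a1 + b1)) + c * (a2 + b2)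
      = a2 * b + 2 * (a1 * b1) + a * b2) :
    c2 ≤ a2 * (b / (a + b)) ^ 2 + b2 * (a / (a + b)) ^ 2 := by
  have hab : 0 < a + b := by linarith
  have e0 : c = a * b / (a + b) := by field_simp; linarith
  have e1 : c1 = (a1 * b + a * b1 - c * (a1 + b1)) / (a + b) := by field_simp; linarith
  have e2 : c2 = (a2 * b + 2 * (a1 * b1) + a * b2 - 2 * (c1 * (a1 + b1)) - c * (a2 + b2)) / (a + b) := by
    field_simp; linarith
  have : a2 * (b / (a + b)) ^ 2 + b2 * (a / (a + b)) ^ 2 - c2 =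
      2 * (a1 * b - a * b1) ^ 2 / (a + b) ^ 3 := by
    rw [e2, e1, e0]; field_simp; ring
  have h3 : 0 ≤ 2 * (a1 * b - a * b1) ^ 2 / (a + b) ^ 3 := by positivity
  linarith

theorem d1_mul {f g : ℝ → ℝ} {t : ℝ} (hf : ContDiffAt ℝ 2 f t) (hg : ContDiffAt ℝ 2 g t) :
    deriv (fun s => f s * g s) t = deriv f t * g t + f t * deriv g t :=
  deriv_fun_mul (hf.differentiableAt (by norm_num)) (hg.differentiableAt (by norm_num))

theorem d2_harm {a b : ℝ → ℝ} {t : ℝ} (ha : ContDiffAt ℝ 2 a t) (hb : ContDiffAt ℝ 2 b t)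
    (hap : 0 < a t) (hbp : 0 < b t) :
    deriv (deriv (fun s => a s * b s / (a s + b s))) t ≤
      deriv (deriv a) t * (b t / (a t + b t)) ^ 2 + deriv (deriv b) t * (a t / (a t + b t)) ^ 2 := by
  have hne : a t + b t ≠ 0 := by linarith
  have hab : ContDiffAt ℝ 2 (fun s => a s + b s) t := ha.add hb
  have hc : ContDiffAt ℝ 2 (fun s => a s * b s / (a s + b s)) t := (ha.mul hb).div hab hne
  set c := fun s => a s * b s / (a s + b s) with hcdef
  have hev : (fun s => c s * (a s + b s)) =ᶠ[nhds t] fun s => a s * b s := by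
    have := hab.continuousAt.eventually_ne hne
    filter_upwards [this] with s hs
    simp only [hcdef]; field_simp
  obtain ⟨ha1, ha2⟩ := d2_data ha
  obtain ⟨hb1, hb2⟩ := d2_data hb
  have hd : deriv (fun s => a s + b s) =ᶠ[nhds t] fun s => deriv a s + deriv b s := by
    filter_upwards [ha1, hb1] with s h1 h2 using deriv_fun_add h1 h2
  have hdd : deriv (deriv (fun s => a s + b s)) t = deriv (deriv a) t + deriv (deriv b) t := by
    rw [hd.deriv_eq, deriv_fun_add ha2 hb2]
  refine harm_alg (c := c t) (c1 := deriv c t) (a1 := deriv a t) (b1 := deriv b t) hap hbp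
    hev.self_of_nhds ?_ ?_
  · have := hev.deriv_eq
    rw [d1_mul hc hab, d1_mul ha hb, hd.self_of_nhds] at this
    exact this
  · have := hev.deriv.deriv_eq
    rw [d2_mul hc hab, d2_mul ha hb, hd.self_of_nhds, hdd] at this
    exact this

theorem lap_harm {N : ℕ} {a b : Euc N → ℝ} {x : Euc N} (ha : ContDiffAt ℝ 2 a x)
    (hb : ContDiffAt ℝ 2 b x) (hap : 0 < a x) (hbp : 0 < b x) :
    lap N (fun y => a y * b y / (a y + b y)) x ≤
      lap N a x * (b x / (a x + b x)) ^ 2 + lap N b x * (a x / (a x + b x)) ^ 2 := by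
  have hc : ContDiffAt ℝ 2 (fun y => a y * b y / (a y + b y)) x :=
    (ha.mul hb).div (ha.add hb) (by linarith)
  rw [lap_line ha, lap_line hb, lap_line hc,
    Finset.sum_mul, Finset.sum_mul, ← Finset.sum_add_distrib]
  refine Finset.sum_le_sum fun i _ => ?_
  have := d2_harm (line_contDiffAt ha (EuclideanSpace.single i (1:ℝ)))
    (line_contDiffAt hb (EuclideanSpace.single i (1:ℝ))) (by simpa using hap) (by simpa using hbp)
  simpa using this

end

open MeasureTheory Real Set
open scoped ENNReal NNReal
noncomputable section

theorem exists_eta {ε : ℝ} (hε : 0 < ε) : ∃ η : ℝ → ℝ, ContDiff ℝ 2 η ∧ (∀ s ≤ ε, η s = 0) ∧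
    (∀ s, 0 ≤ deriv η s ∧ deriv η s ≤ 1) ∧ (∀ s, 0 ≤ deriv (deriv η) s) ∧
    (∀ s, 0 ≤ s → s - 2 * ε ≤ η s ∧ η s ≤ s ∧ 0 ≤ η s) ∧ (∀ s, 2 * ε ≤ s → deriv η s = 1) := by
  set θ : ℝ → ℝ := fun τ => Real.smoothTransition ((τ - ε) / ε) with hθ
  have hθs : ContDiff ℝ 1 θ := by
    have := Real.smoothTransition.contDiff (n := 1)
    exact this.comp (by fun_prop)
  have hθc : Continuous θ := hθs.continuous
  have hmono : Monotone θ := fun a b hab => Real.smoothTransition.monotone (by gcongr)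
  have h0 : ∀ s, 0 ≤ θ s := fun s => Real.smoothTransition.nonneg _
  have h1 : ∀ s, θ s ≤ 1 := fun s => Real.smoothTransition.le_one _
  have hz : ∀ s ≤ ε, θ s = 0 := fun s hs => Real.smoothTransition.zero_of_nonpos
    (div_nonpos_of_nonpos_of_nonneg (by linarith) hε.le)
  have ho : ∀ s, 2 * ε ≤ s → θ s = 1 := fun s hs => Real.smoothTransition.one_of_one_le
    (by rw [le_div_iff₀ hε]; linarith)
  set η : ℝ → ℝ := fun s => ∫ τ in (0:ℝ)..s, θ τ with hη
  have hd : ∀ s, HasDerivAt η (θ s) s := fun s => hθc.integral_hasStrictDerivAt 0 s |>.hasDerivAt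
  have hdd : deriv η = θ := funext fun s => (hd s).deriv
  have hI : ∀ a b, IntervalIntegrable θ volume a b := fun a b => hθc.intervalIntegrable a b
  have hzero : ∀ s ≤ ε, η s = 0 := by
    intro s hs
    simp only [hη]
    rw [intervalIntegral.integral_congr (g := fun _ => (0:ℝ))]
    · simp
    · intro τ hτ
      apply hz
      have := hτ.2
      exact this.trans (max_le hε.le hs)
  have hnn : ∀ s, 0 ≤ s → 0 ≤ η s := fun s hs =>
    intervalIntegral.integral_nonneg hs fun τ _ => h0 τ
  refine ⟨η, ?_, hzero, ?_, ?_, ?_, ?_⟩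
  · have : ContDiff ℝ (1 + 1) η := by
      rw [contDiff_succ_iff_deriv]
      refine ⟨fun s => (hd s).differentiableAt, by simp, by rw [hdd]; exact hθs⟩
    exact_mod_cast this
  · intro s; rw [hdd]; exact ⟨h0 s, h1 s⟩
  · intro s; rw [hdd]; exact hmono.deriv_nonneg
  · intro s hs
    refine ⟨?_, ?_, hnn s hs⟩
    · by_cases h : s ≤ 2 * ε
      · linarith [hnn s hs]
      · push Not at h
        have e : η s = η (2 * ε) + ∫ τ in (2*ε)..s, θ τ :=
          (intervalIntegral.integral_add_adjacent_intervals (hI _ _) (hI _ _)).symm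
        have e2 : ∫ τ in (2*ε)..s, θ τ = s - 2 * ε := by
          rw [intervalIntegral.integral_congr (g := fun _ => (1:ℝ))]
          · simp
          · intro τ hτ
            rw [uIcc_of_le h.le] at hτ
            exact ho τ hτ.1
        linarith [hnn (2 * ε) (by linarith)]
    · have : η s ≤ ∫ τ in (0:ℝ)..s, (1:ℝ) :=
        intervalIntegral.integral_mono_on hs (hI _ _) (by simp) fun τ _ => h1 τ
      simpa using this
  · intro s hs; rw [hdd]; exact ho s hs

theorem integrable_mul_of_tsupport {N : ℕ} {U : Set (Euc N)} {f h : Euc N → ℝ}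
    (hf : Continuous f) (hfc : HasCompactSupport f) (hfU : tsupport f ⊆ U)
    (hh : ContinuousOn h U) : Integrable (fun x => f x * h x) := by
  have h1 : IntegrableOn (fun x => f x * h x) (tsupport f) :=
    (hf.continuousOn.mul (hh.mono hfU)).integrableOn_compact hfc
  refine (integrableOn_iff_integrable_of_support_subset ?_).1 h1
  intro x hx
  apply subset_tsupport
  intro h0
  apply hx
  simp [h0]

theorem lap_eq_fderiv {N : ℕ} {U : Set (Euc N)} (hU : IsOpen U) {v : Euc N → ℝ}
    (hv : ContDiffOn ℝ 2 v U) {x : Euc N} (hx : x ∈ U) :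
    lap N v x = ∑ i : Fin N, fderiv ℝ (fun y => fderiv ℝ v y (EuclideanSpace.single i 1)) x
      (EuclideanSpace.single i 1) := by
  unfold lap
  refine Finset.sum_congr rfl fun i _ => ?_
  rw [iteratedFDeriv_two_apply]
  simp only [Matrix.cons_val_zero, Matrix.cons_val_one]
  have h3 : DifferentiableAt ℝ (fderiv ℝ v) x :=
    ((hv.contDiffAt (hU.mem_nhds hx)).fderiv_right (m := 1) (by norm_num)).differentiableAt
      (by norm_num)
  rw [fderiv_clm_apply h3 (differentiableAt_const _)]
  simp

theorem d1_contDiffOn {N : ℕ} {U : Set (Euc N)} (hU : IsOpen U) {v : Euc N → ℝ}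
    (hv : ContDiffOn ℝ 2 v U) (e : Euc N) : ContDiffOn ℝ 1 (fun y => fderiv ℝ v y e) U := by
  intro x hx
  have := ((hv.contDiffAt (hU.mem_nhds hx)).fderiv_right (m := 1) (by norm_num))
  exact (this.clm_apply contDiffAt_const).contDiffWithinAt

theorem d2_continuousOn {N : ℕ} {U : Set (Euc N)} (hU : IsOpen U) {v : Euc N → ℝ}
    (hv : ContDiffOn ℝ 2 v U) (e : Euc N) :
    ContinuousOn (fun x => fderiv ℝ (fun y => fderiv ℝ v y e) x e) U := by
  intro x hx
  have h1 := (d1_contDiffOn hU hv e).contDiffAt (hU.mem_nhds hx)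
  have h2 := h1.fderiv_right (m := 0) (by norm_num)
  exact (h2.clm_apply contDiffAt_const).continuousAt.continuousWithinAt

theorem lap_continuousOn {N : ℕ} {U : Set (Euc N)} (hU : IsOpen U) {v : Euc N → ℝ}
    (hv : ContDiffOn ℝ 2 v U) : ContinuousOn (lap N v) U := by
  have : ContinuousOn (fun x => ∑ i : Fin N, fderiv ℝ (fun y => fderiv ℝ v y
      (EuclideanSpace.single i 1)) x (EuclideanSpace.single i 1)) U :=
    continuousOn_finsetSum _ fun i _ => d2_continuousOn hU hv _
  exact this.congr fun x hx => lap_eq_fderiv hU hv hx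

theorem tsupport_fderiv_apply {N : ℕ} (T : Euc N → ℝ) (e : Euc N) :
    tsupport (fun y => fderiv ℝ T y e) ⊆ tsupport T := by
  refine closure_minimal ?_ (isClosed_tsupport T)
  intro x hx
  apply support_fderiv_subset ℝ
  intro h
  apply hx
  simp [h]

theorem green {N : ℕ} {U : Set (Euc N)} (hU : IsOpen U) {v T : Euc N → ℝ}
    (hv : ContDiffOn ℝ 2 v U) (hT : ContDiff ℝ 2 T) (hTc : HasCompactSupport T)
    (hTU : tsupport T ⊆ U) : ∫ x, T x * lap N v x = ∫ x, v x * lap N T x := by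
  have hTon : ContDiffOn ℝ 2 T univ := hT.contDiffOn
  have hd1T : ∀ e, ContDiff ℝ 1 (fun y => fderiv ℝ T y e) := fun e =>
    contDiffOn_univ.1 (d1_contDiffOn isOpen_univ hTon e)
  have hc1T : ∀ e, HasCompactSupport (fun y => fderiv ℝ T y e) := fun e =>
    hTc.of_isClosed_subset (isClosed_tsupport _) (tsupport_fderiv_apply T e)
  have hc2T : ∀ e, Continuous (fun x => fderiv ℝ (fun y => fderiv ℝ T y e) x e) := fun e =>
    continuousOn_univ.1 (d2_continuousOn isOpen_univ hTon e)
  have hc2T' : ∀ e, HasCompactSupport (fun x => fderiv ℝ (fun y => fderiv ℝ T y e) x e) := fun e =>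
    (hc1T e).of_isClosed_subset (isClosed_tsupport _) (tsupport_fderiv_apply _ e)
  have hvd : ∀ x ∈ U, DifferentiableAt ℝ v x := fun x hx =>
    (hv.contDiffAt (hU.mem_nhds hx)).differentiableAt (by norm_num)
  have i1 : ∀ e, Integrable (fun x => T x * fderiv ℝ (fun y => fderiv ℝ v y e) x e) := fun e =>
    integrable_mul_of_tsupport hT.continuous hTc hTU (d2_continuousOn hU hv e)
  have i2 : ∀ e, Integrable (fun x => fderiv ℝ T x e * fderiv ℝ v x e) := fun e =>
    integrable_mul_of_tsupport (hd1T e).continuous (hc1T e) ((tsupport_fderiv_apply T e).trans hTU)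
      (d1_contDiffOn hU hv e).continuousOn
  have i3 : ∀ e, Integrable (fun x => fderiv ℝ (fun y => fderiv ℝ T y e) x e * v x) := fun e =>
    integrable_mul_of_tsupport (hc2T e) (hc2T' e)
      (((tsupport_fderiv_apply _ e).trans (tsupport_fderiv_apply T e)).trans hTU) hv.continuousOn
  have key : ∀ e, ∫ x, T x * fderiv ℝ (fun y => fderiv ℝ v y e) x e =
      ∫ x, fderiv ℝ (fun y => fderiv ℝ T y e) x e * v x := by
    intro e
    have A := integral_mul_fderiv_eq_neg_fderiv_mul_of_integrable (μ := (volume : Measure (Euc N)))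
      (f := T) (g := fun y => fderiv ℝ v y e) (v := e) (i2 e) (i1 e)
      (integrable_mul_of_tsupport hT.continuous hTc hTU (d1_contDiffOn hU hv e).continuousOn)
      (fun x _ => hT.differentiable (by norm_num) x)
      (fun x hx => ((d1_contDiffOn hU hv e).contDiffAt (hU.mem_nhds (hTU hx))).differentiableAt
        (by norm_num))
    have B := integral_mul_fderiv_eq_neg_fderiv_mul_of_integrable (μ := (volume : Measure (Euc N)))
      (f := fun y => fderiv ℝ T y e) (g := v) (v := e) (i3 e) (i2 e)
      (integrable_mul_of_tsupport (hd1T e).continuous (hc1T e)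
        ((tsupport_fderiv_apply T e).trans hTU) hv.continuousOn)
      (fun x _ => (hd1T e).differentiable (by norm_num) x)
      (fun x hx => hvd x (hTU (tsupport_fderiv_apply T e hx)))
    rw [A, B, neg_neg]
  have e1 : ∀ x, T x * lap N v x = ∑ i : Fin N, T x *
      fderiv ℝ (fun y => fderiv ℝ v y (EuclideanSpace.single i 1)) x
      (EuclideanSpace.single i 1) := by
    intro x
    by_cases hx : x ∈ U
    · rw [lap_eq_fderiv hU hv hx, Finset.mul_sum]
    · have : T x = 0 := image_eq_zero_of_notMem_tsupport fun h => hx (hTU h)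
      simp [this]
  have e2 : ∀ x, v x * lap N T x = ∑ i : Fin N,
      fderiv ℝ (fun y => fderiv ℝ T y (EuclideanSpace.single i 1)) x
      (EuclideanSpace.single i 1) * v x := by
    intro x
    rw [lap_eq_fderiv isOpen_univ hTon (mem_univ x), mul_comm, Finset.sum_mul]
  simp_rw [e1, e2]
  rw [integral_finsetSum _ fun i _ => i1 _, integral_finsetSum _ fun i _ => i3 _]
  exact Finset.sum_congr rfl fun i _ => key _

/-- bounded, boundedly supported, continuous functions are integrable -/
theorem intOn_of_bdd {N : ℕ} {U : Set (Euc N)} (hU : IsOpen U) {h : Euc N → ℝ}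
    (hh : ContinuousOn h U) {C R : ℝ} (hC : ∀ x ∈ U, |h x| ≤ C) (hR : ∀ x ∈ U, R < ‖x‖ → h x = 0) :
    IntegrableOn h U := by
  have hb : Integrable (indicator (Metric.closedBall (0 : Euc N) R) (fun _ => C)) (volume.restrict U) :=
    ((integrable_indicator_iff measurableSet_closedBall).2
      (integrableOn_const (measure_closedBall_lt_top.ne))).integrableOn
  refine Integrable.mono' hb (hh.aestronglyMeasurable hU.measurableSet) ?_
  filter_upwards [ae_restrict_mem hU.measurableSet] with x hx
  by_cases h1 : ‖x‖ ≤ R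
  · rw [indicator_of_mem (by simpa using h1)]; exact hC x hx
  · rw [hR x hx (by linarith), indicator_of_notMem (by simpa using h1)]; simp

end

open MeasureTheory Real Set
open scoped ENNReal NNReal
noncomputable section

theorem deriv_zero_off {χ : ℝ → ℝ} {a b : ℝ} (h : ∀ s, s ∉ Icc a b → χ s = 0) :
    ∀ s, s ∉ Icc a b → deriv χ s = 0 := by
  intro s hs
  have : χ =ᶠ[nhds s] fun _ => 0 := by
    filter_upwards [isClosed_Icc.isOpen_compl.mem_nhds hs] with y hy using h y hy
  rw [this.deriv_eq]; simp

theorem bdd_of_off {χ : ℝ → ℝ} (hc : Continuous χ) {a b : ℝ} (h : ∀ s, s ∉ Icc a b → χ s = 0) :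
    ∃ C, 0 ≤ C ∧ ∀ s, |χ s| ≤ C := by
  obtain ⟨C, hC⟩ := (isCompact_Icc (a := a) (b := b)).exists_bound_of_continuousOn hc.continuousOn
  refine ⟨max C 0, le_max_right _ _, fun s => ?_⟩
  by_cases hs : s ∈ Icc a b
  · exact (hC s hs).trans (le_max_left _ _)
  · rw [h s hs]; simp

section
variable {N : ℕ} {Ω : Set (Euc N)} {lam1 : ℝ} {φ : Euc N → ℝ}

theorem bigPhi_continuousOn (hΩ : IsConeDomain N Ω) (hphi : DirichletEigenpair N Ω lam1 φ)
    {ρ : ℝ} (hρ : 0 < ρ) : ContinuousOn (bigPhi φ) (coneGT N ρ Ω) := fun _ hx =>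
  (bigPhi_contDiffAt hΩ hphi (coneGT_sub hρ hx)).continuousAt.continuousWithinAt

theorem logn_continuousOn {ρ : ℝ} (hρ : 0 < ρ) :
    ContinuousOn (fun x : Euc N => Real.log ‖x‖) (coneGT N ρ Ω) := fun _ hx =>
  (logn_contDiffAt (coneGT_sub hρ hx).1).continuousAt.continuousWithinAt

theorem compact_K (hΩ : IsConeDomain N Ω) (hphi : DirichletEigenpair N Ω lam1 φ)
    {ρ a b ε : ℝ} (hρ : 0 < ρ) (ha : Real.log ρ < a) (hε : 0 < ε) :
    ∃ K : Set (Euc N), IsCompact K ∧ K ⊆ coneGT N ρ Ω ∧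
      ∀ x ∈ coneGT N ρ Ω, Real.log ‖x‖ ∈ Icc a b → ε ≤ bigPhi φ x → x ∈ K := by
  set S : Set (Euc N) := closure Ω ∩ φ ⁻¹' Ici ε with hS
  have hSΩ : S ⊆ Ω := by
    intro ω hω
    by_contra h
    have := hphi.bdryZero ω ⟨hω.1, h⟩
    have h2 : ε ≤ φ ω := hω.2
    linarith
  have hSc : IsCompact S := by
    have h1 : IsClosed S := hphi.contOn.preimage_isClosed_of_isClosed isClosed_closure isClosed_Ici
    exact (isCompact_sphere (0 : Euc N) 1).of_isClosed_subset h1 (hSΩ.trans hΩ.1)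
  refine ⟨(fun z : ℝ × Euc N => z.1 • z.2) '' (Icc (exp a) (exp b) ×ˢ S), ?_, ?_, ?_⟩
  · exact (isCompact_Icc.prod hSc).image (by fun_prop)
  · rintro _ ⟨⟨r, ω⟩, ⟨hr, hω⟩, rfl⟩
    have hr0 : 0 < r := (exp_pos a).trans_le hr.1
    have h1 : ‖ω‖ = 1 := by simpa using hΩ.1 (hSΩ hω)
    have hn : ‖r • ω‖ = r := by rw [norm_smul, h1, mul_one, Real.norm_of_nonneg hr0.le]
    refine ⟨?_, ?_⟩
    · show ρ < ‖r • ω‖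
      rw [hn]
      calc ρ = exp (Real.log ρ) := (exp_log hρ).symm
        _ < exp a := exp_lt_exp.2 ha
        _ ≤ r := hr.1
    · show ‖r • ω‖⁻¹ • (r • ω) ∈ Ω
      rw [hn, smul_smul, inv_mul_cancel₀ hr0.ne', one_smul]
      exact hSΩ hω
  · intro x hx hL hP
    have hn : 0 < ‖x‖ := hρ.trans hx.1
    refine ⟨(‖x‖, ‖x‖⁻¹ • x), ⟨⟨?_, ?_⟩, subset_closure hx.2, hP⟩, ?_⟩
    · rw [← exp_log hn]; exact exp_le_exp.2 hL.1
    · show ‖x‖ ≤ _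
      rw [← exp_log hn]; exact exp_le_exp.2 hL.2
    · show ‖x‖ • ‖x‖⁻¹ • x = x
      rw [smul_smul, mul_inv_cancel₀ hn.ne', one_smul]

theorem core_eps (hΩ : IsConeDomain N Ω) (hphi : DirichletEigenpair N Ω lam1 φ)
    {ρ a b ε k μ : ℝ} (hρ : 0 < ρ) (ha : Real.log ρ < a) (hε : 0 < ε)
    (hk : k * (k + (N - 2)) = lam1 - μ) {v f : Euc N → ℝ}
    (hv : ContDiffOn ℝ 2 v (coneGT N ρ Ω)) (hv0 : ∀ x ∈ coneGT N ρ Ω, 0 ≤ v x)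
    (hf : ContinuousOn f (coneGT N ρ Ω))
    (hineq : ∀ x ∈ coneGT N ρ Ω, f x ≤ -lap N v x - μ / ‖x‖ ^ 2 * v x)
    {χ : ℝ → ℝ} (hχ : ContDiff ℝ 2 χ) (hχ0 : ∀ s, 0 ≤ χ s) (hχs : ∀ s, s ∉ Icc a b → χ s = 0)
    {η : ℝ → ℝ} (hη : ContDiff ℝ 2 η) (hηz : ∀ s ≤ ε, η s = 0)
    (hη0 : ∀ s, 0 ≤ s → 0 ≤ η s) (hη2 : ∀ s, 0 ≤ deriv (deriv η) s)
    (hIntg : IntegrableOn (fun x => v x * ((‖x‖ ^ 2)⁻¹ * exp (k * Real.log ‖x‖) *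
        (-(deriv (deriv χ) (Real.log ‖x‖) + (2 * k + (N - 2)) * deriv χ (Real.log ‖x‖))
            * η (bigPhi φ x)
          + lam1 * χ (Real.log ‖x‖) * (deriv η (bigPhi φ x) * bigPhi φ x - η (bigPhi φ x)))))
            (coneGT N ρ Ω)) :
    ∫ x in coneGT N ρ Ω, f x * (exp (k * Real.log ‖x‖) * χ (Real.log ‖x‖) * η (bigPhi φ x)) ≤
    ∫ x in coneGT N ρ Ω, v x * ((‖x‖ ^ 2)⁻¹ * exp (k * Real.log ‖x‖) *
        (-(deriv (deriv χ) (Real.log ‖x‖) + (2 * k + (N - 2)) * deriv χ (Real.log ‖x‖))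
            * η (bigPhi φ x)
          + lam1 * χ (Real.log ‖x‖) * (deriv η (bigPhi φ x) * bigPhi φ x - η (bigPhi φ x)))) := by
  set U := coneGT N ρ Ω with hUdef
  have hU : IsOpen U := isOpen_coneGT hρ hΩ
  obtain ⟨K, hK, hKU, hKm⟩ := compact_K (b := b) hΩ hphi hρ ha hε
  set G : ℝ → ℝ := fun s => exp (k * s) * χ s with hG
  have hGc : ContDiff ℝ 2 G := by
    have : ContDiff ℝ 2 (fun s : ℝ => exp (k * s)) := by fun_prop
    exact this.mul hχ
  set T0 : Euc N → ℝ := fun x => G (Real.log ‖x‖) * η (bigPhi φ x) with hT0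
  set T : Euc N → ℝ := U.indicator T0 with hT
  have hTz : ∀ x, x ∉ K → T x = 0 := by
    intro x hx
    by_cases hxU : x ∈ U
    · rw [hT, indicator_of_mem hxU, hT0]
      by_cases h1 : Real.log ‖x‖ ∈ Icc a b
      · have h2 : bigPhi φ x ≤ ε := by
          by_contra h
          exact hx (hKm x hxU h1 (by linarith))
        simp [hηz _ h2]
      · simp [hG, hχs _ h1]
    · exact indicator_of_notMem hxU _
  have hTev : ∀ x ∈ U, T =ᶠ[nhds x] T0 := by
    intro x hx
    filter_upwards [hU.mem_nhds hx] with y hy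
    exact indicator_of_mem hy _
  have hTd : ContDiff ℝ 2 T := by
    rw [contDiff_iff_contDiffAt]
    intro x
    by_cases hx : x ∈ U
    · exact (GPhi_contDiffAt hΩ hphi (coneGT_sub hρ hx) hGc.contDiffAt
        hη.contDiffAt).congr_of_eventuallyEq (hTev x hx)
    · have : T =ᶠ[nhds x] fun _ => 0 := by
        filter_upwards [hK.isClosed.isOpen_compl.mem_nhds fun h => hx (hKU h)] with y hy
        exact hTz y hy
      exact contDiffAt_const.congr_of_eventuallyEq this
  have hts : tsupport T ⊆ K := closure_minimal (fun x hx => by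
    by_contra h
    exact hx (hTz x h)) hK.isClosed
  have hTc : HasCompactSupport T := hK.of_isClosed_subset (isClosed_tsupport _) hts
  have hTU := hts.trans hKU
  have hgreen := green hU hv hTd hTc hTU
  have hT0' : ∀ x, 0 ≤ T x := by
    intro x
    by_cases hx : x ∈ U
    · rw [hT, indicator_of_mem hx]
      exact mul_nonneg (mul_nonneg (exp_pos _).le (hχ0 _))
        (hη0 _ (bigPhi_pos hphi (coneGT_sub hρ hx)).le)
    · rw [hT, indicator_of_notMem hx]
  have hlapT0 : ∀ x, x ∉ U → lap N T x = 0 := by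
    intro x hx
    have : T =ᶠ[nhds x] fun _ => 0 := by
      filter_upwards [hK.isClosed.isOpen_compl.mem_nhds fun h => hx (hKU h)] with y hy
      exact hTz y hy
    rw [lap_congr this]
    simp [lap]
  have hlapTs : ∀ x, x ∉ K → lap N T x = 0 := by
    intro x hx
    have : T =ᶠ[nhds x] fun _ => 0 := by
      filter_upwards [hK.isClosed.isOpen_compl.mem_nhds hx] with y hy
      exact hTz y hy
    rw [lap_congr this]
    simp [lap]
  have hnorm : ContinuousOn (fun x : Euc N => μ / ‖x‖ ^ 2 * v x) U := by
    refine ContinuousOn.mul (ContinuousOn.div continuousOn_const (by fun_prop) ?_) hv.continuousOn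
    intro x hx
    have : 0 < ‖x‖ := hρ.trans hx.1
    positivity
  have I1 : Integrable (fun x => T x * f x) := integrable_mul_of_tsupport hTd.continuous hTc hTU hf
  have I2 : Integrable (fun x => T x * lap N v x) :=
    integrable_mul_of_tsupport hTd.continuous hTc hTU (lap_continuousOn hU hv)
  have I3 : Integrable (fun x => T x * (μ / ‖x‖ ^ 2 * v x)) :=
    integrable_mul_of_tsupport hTd.continuous hTc hTU hnorm
  have hlapc : Continuous (lap N T) :=
    continuousOn_univ.1 (lap_continuousOn isOpen_univ hTd.contDiffOn)
  have hlts : tsupport (lap N T) ⊆ K := closure_minimal (fun x hx => by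
    by_contra h
    exact hx (hlapTs x h)) hK.isClosed
  have I4 : Integrable (fun x => lap N T x * v x) :=
    integrable_mul_of_tsupport hlapc (hK.of_isClosed_subset (isClosed_tsupport _) hlts)
      (hlts.trans hKU) hv.continuousOn
  have I2n : Integrable (fun x => -(T x * lap N v x)) := I2.neg
  have I4n : Integrable (fun x => -(lap N T x * v x)) := I4.neg
  have S1 : ∫ x in U, f x * (exp (k * Real.log ‖x‖) * χ (Real.log ‖x‖) * η (bigPhi φ x)) =
      ∫ x, T x * f x := by
    rw [← setIntegral_eq_integral_of_forall_compl_eq_zero (s := U) (f := fun x => T x * f x)]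
    · refine setIntegral_congr_fun hU.measurableSet fun x hx => ?_
      simp only [hT, indicator_of_mem hx, hT0, hG]; ring
    · intro x hx; simp [hT, indicator_of_notMem hx]
  have S2 : ∫ x, T x * f x ≤ ∫ x, (-(T x * lap N v x) - T x * (μ / ‖x‖ ^ 2 * v x)) := by
    refine integral_mono I1 (I2n.sub I3) fun x => ?_
    by_cases hx : x ∈ U
    · have := mul_le_mul_of_nonneg_left (hineq x hx) (hT0' x)
      simp only; linarith
    · simp [hT, indicator_of_notMem hx]
  have S3 : ∫ x, (-(T x * lap N v x) - T x * (μ / ‖x‖ ^ 2 * v x)) =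
      ∫ x, (-(lap N T x * v x) - T x * (μ / ‖x‖ ^ 2 * v x)) := by
    rw [integral_sub I2n I3, integral_sub I4n I3, integral_neg, integral_neg, hgreen]
    simp_rw [mul_comm]
  have S4 : ∫ x, (-(lap N T x * v x) - T x * (μ / ‖x‖ ^ 2 * v x)) =
      ∫ x in U, (-(lap N T x * v x) - T x * (μ / ‖x‖ ^ 2 * v x)) := by
    symm
    apply setIntegral_eq_integral_of_forall_compl_eq_zero
    intro x hx
    simp [hT, indicator_of_notMem hx]
    left; exact hlapT0 x hx
  rw [S1]
  refine S2.trans ?_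
  rw [S3, S4]
  refine setIntegral_mono_on (I4n.sub I3).integrableOn hIntg hU.measurableSet fun x hx => ?_
  have hxc := coneGT_sub hρ hx
  obtain ⟨Q, hQ, hlap⟩ := lap_GPhi hΩ hphi hxc (G := G) (η := η) hGc.contDiffAt hη.contDiffAt
  have hlT : lap N T x = _ := (lap_congr (hTev x hx)).trans hlap
  have hd1 : ∀ s, deriv (fun s : ℝ => exp (k * s)) s = k * exp (k * s) := by
    intro s
    have := (((hasDerivAt_id s).const_mul k).exp).deriv
    simp only [id] at this
    rw [this]; ring
  have hd2 : ∀ s, deriv (deriv (fun s : ℝ => exp (k * s))) s = k ^ 2 * exp (k * s) := by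
    intro s
    have : deriv (fun s : ℝ => exp (k * s)) = fun s => k * exp (k * s) := funext hd1
    rw [this, deriv_const_mul _ (by fun_prop), hd1]; ring
  have hex : ContDiff ℝ 2 (fun s : ℝ => exp (k * s)) := by fun_prop
  have hG1 : ∀ s, deriv G s = k * exp (k * s) * χ s + exp (k * s) * deriv χ s := by
    intro s
    rw [hG, d1_mul hex.contDiffAt hχ.contDiffAt, hd1]
  have hG2 : ∀ s, deriv (deriv G) s = k ^ 2 * exp (k * s) * χ s +
      2 * (k * exp (k * s) * deriv χ s) + exp (k * s) * deriv (deriv χ) s := by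
    intro s
    rw [hG, d2_mul hex.contDiffAt hχ.contDiffAt, hd1, hd2]
  have hTx : T x = exp (k * Real.log ‖x‖) * χ (Real.log ‖x‖) * η (bigPhi φ x) := by
    simp only [hT, indicator_of_mem hx, hT0, hG]
  rw [hlT, hG1, hG2, hTx]
  have hn : 0 < ‖x‖ := hρ.trans hx.1
  simp only [hG]
  have hpos : 0 ≤ v x * (exp (k * Real.log ‖x‖) * χ (Real.log ‖x‖)) *
      (deriv (deriv η) (bigPhi φ x) * Q) :=
    mul_nonneg (mul_nonneg (hv0 x hx) (mul_nonneg (exp_pos _).le (hχ0 _))) (mul_nonneg (hη2 _) hQ)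
  have hmu : μ = lam1 - k * (k + (N - 2)) := by linarith
  rw [← sub_nonneg]
  refine le_of_le_of_eq hpos ?_
  rw [hmu]
  field_simp
  ring

end
end

open MeasureTheory Real Set
open scoped ENNReal NNReal
noncomputable section

theorem tendsto_intOn {N : ℕ} {U : Set (Euc N)} (hU : IsOpen U) {F : ℕ → Euc N → ℝ} {G : Euc N → ℝ}
    (hh : ∀ n, ContinuousOn (F n) U) {C R : ℝ} (hC : ∀ n, ∀ x ∈ U, |F n x| ≤ C)
    (hR : ∀ n, ∀ x ∈ U, R < ‖x‖ → F n x = 0)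
    (hl : ∀ x ∈ U, Filter.Tendsto (fun n => F n x) Filter.atTop (nhds (G x))) :
    Filter.Tendsto (fun n => ∫ x in U, F n x) Filter.atTop (nhds (∫ x in U, G x)) := by
  have hb : Integrable (indicator (Metric.closedBall (0 : Euc N) R) (fun _ => C)) (volume.restrict U) :=
    ((integrable_indicator_iff measurableSet_closedBall).2
      (integrableOn_const (measure_closedBall_lt_top.ne))).integrableOn
  refine tendsto_integral_of_dominated_convergence _
    (fun n => (hh n).aestronglyMeasurable hU.measurableSet) hb (fun n => ?_) ?_
  · filter_upwards [ae_restrict_mem hU.measurableSet] with x hx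
    by_cases h1 : ‖x‖ ≤ R
    · rw [indicator_of_mem (by simpa using h1)]; exact hC n x hx
    · rw [hR n x hx (by linarith), indicator_of_notMem (by simpa using h1)]; simp
  · filter_upwards [ae_restrict_mem hU.measurableSet] with x hx using hl x hx

section
variable {N : ℕ} {Ω : Set (Euc N)} {lam1 : ℝ} {φ : Euc N → ℝ}

/-- bounded on bounded parts of a set -/
def BddLoc (U : Set (Euc N)) (v : Euc N → ℝ) : Prop :=
  ∀ R : ℝ, ∃ C : ℝ, ∀ x ∈ U, ‖x‖ ≤ R → |v x| ≤ C

theorem BddLoc.nn {U : Set (Euc N)} {v : Euc N → ℝ} (h : BddLoc U v) (R : ℝ) :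
    ∃ C : ℝ, 0 ≤ C ∧ ∀ x ∈ U, ‖x‖ ≤ R → |v x| ≤ C := by
  obtain ⟨C, hC⟩ := h R
  exact ⟨|C|, abs_nonneg _, fun x hx hR => (hC x hx hR).trans (le_abs_self _)⟩

theorem log_off {b : ℝ} {x : Euc N} (h : exp b < ‖x‖) {a : ℝ} : Real.log ‖x‖ ∉ Icc a b := by
  intro h2
  have := exp_le_exp.2 h2.2
  rw [exp_log ((exp_pos b).trans h)] at this
  linarith

theorem core_lim (hΩ : IsConeDomain N Ω) (hphi : DirichletEigenpair N Ω lam1 φ)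
    {ρ a b k μ : ℝ} (hρ : 0 < ρ) (ha : Real.log ρ < a)
    (hk : k * (k + (N - 2)) = lam1 - μ) {v f : Euc N → ℝ}
    (hv : ContDiffOn ℝ 2 v (coneGT N ρ Ω)) (hv0 : ∀ x ∈ coneGT N ρ Ω, 0 ≤ v x)
    (hvb : BddLoc (coneGT N ρ Ω) v) (hfb : BddLoc (coneGT N ρ Ω) f)
    (hf : ContinuousOn f (coneGT N ρ Ω))
    (hineq : ∀ x ∈ coneGT N ρ Ω, f x ≤ -lap N v x - μ / ‖x‖ ^ 2 * v x)
    {χ : ℝ → ℝ} (hχ : ContDiff ℝ 2 χ) (hχ0 : ∀ s, 0 ≤ χ s) (hχs : ∀ s, s ∉ Icc a b → χ s = 0) :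
    ∫ x in coneGT N ρ Ω, f x * (exp (k * Real.log ‖x‖) * χ (Real.log ‖x‖) * bigPhi φ x) ≤
    ∫ x in coneGT N ρ Ω, v x * ((‖x‖ ^ 2)⁻¹ * exp (k * Real.log ‖x‖) *
        (-(deriv (deriv χ) (Real.log ‖x‖) + (2 * k + (N - 2)) * deriv χ (Real.log ‖x‖))
            * bigPhi φ x)) := by
  set U := coneGT N ρ Ω with hUdef
  have hU : IsOpen U := isOpen_coneGT hρ hΩ
  have hχ1 : ContDiff ℝ 1 (deriv χ) := by
    have : ContDiff ℝ (1 + 1) χ := by simpa [one_add_one_eq_two] using hχ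
    exact (contDiff_succ_iff_deriv.1 this).2.2
  have hχ2 : Continuous (deriv (deriv χ)) := hχ1.continuous_deriv le_rfl
  have hz1 := deriv_zero_off hχs
  have hz2 := deriv_zero_off hz1
  choose! η h1 h2 h3 h4 h5 h6 using fun ε (hε : 0 < ε) => exists_eta hε
  set e : ℕ → ℝ := fun n => 1 / ((n : ℝ) + 1) with he
  have he0 : ∀ n, 0 < e n := fun n => Nat.one_div_pos_of_nat
  have helim : Filter.Tendsto e Filter.atTop (nhds 0) := tendsto_one_div_add_atTop_nhds_zero_nat
  have hP0 : ∀ x ∈ U, 0 < bigPhi φ x := fun x hx => bigPhi_pos hphi (coneGT_sub hρ hx)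
  have hP1 : ∀ x ∈ U, bigPhi φ x ≤ 1 := fun x hx => bigPhi_le hphi (coneGT_sub hρ hx)
  have hPc := bigPhi_continuousOn hΩ hphi hρ
  have hLc := logn_continuousOn (Ω := Ω) (N := N) hρ
  set w : ℝ → ℝ := fun s => exp (k * s) * χ s with hw
  set w1 : ℝ → ℝ := fun s => exp (-2 * s) * exp (k * s) *
    (-(deriv (deriv χ) s + (2 * k + (N - 2)) * deriv χ s)) with hw1
  set w2 : ℝ → ℝ := fun s => exp (-2 * s) * exp (k * s) * (lam1 * χ s) with hw2
  have hwc : Continuous w := by have := hχ.continuous; fun_prop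
  have hw1c : Continuous w1 := by have := hχ1.continuous; fun_prop
  have hw2c : Continuous w2 := by have := hχ.continuous; fun_prop
  have hwz : ∀ s, s ∉ Icc a b → w s = 0 := fun s hs => by simp [hw, hχs s hs]
  have hw1z : ∀ s, s ∉ Icc a b → w1 s = 0 := fun s hs => by simp [hw1, hz1 s hs, hz2 s hs]
  have hw2z : ∀ s, s ∉ Icc a b → w2 s = 0 := fun s hs => by simp [hw2, hχs s hs]
  obtain ⟨C, hC0, hC⟩ := bdd_of_off hwc hwz
  obtain ⟨C1, hC10, hC1⟩ := bdd_of_off hw1c hw1z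
  obtain ⟨C2, hC20, hC2⟩ := bdd_of_off hw2c hw2z
  obtain ⟨Cv, hCv0, hCv⟩ := hvb.nn (exp b)
  obtain ⟨Cf, hCf0, hCf⟩ := hfb.nn (exp b)
  set F : ℕ → Euc N → ℝ := fun n x => f x * (w (Real.log ‖x‖) * η (e n) (bigPhi φ x)) with hF
  set J : ℕ → Euc N → ℝ := fun n x => v x * (w1 (Real.log ‖x‖) * η (e n) (bigPhi φ x) +
    w2 (Real.log ‖x‖) * (deriv (η (e n)) (bigPhi φ x) * bigPhi φ x - η (e n) (bigPhi φ x))) with hJ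
  have hηd : ∀ n, Continuous (deriv (η (e n))) := fun n =>
    (h1 _ (he0 n)).continuous_deriv (by norm_num)
  have hηb : ∀ n, ∀ x ∈ U, |η (e n) (bigPhi φ x)| ≤ 1 := fun n x hx => by
    have := h5 _ (he0 n) _ (hP0 x hx).le
    rw [abs_of_nonneg this.2.2]; linarith [hP1 x hx]
  have hηb2 : ∀ n, ∀ x ∈ U, |deriv (η (e n)) (bigPhi φ x) * bigPhi φ x - η (e n) (bigPhi φ x)| ≤ 1 :=
    fun n x hx => by
    have := h5 _ (he0 n) _ (hP0 x hx).le
    have h' := h3 _ (he0 n) (bigPhi φ x)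
    have p0 := hP0 x hx
    have p1 := hP1 x hx
    rw [abs_le]; constructor <;> nlinarith
  have hFc : ∀ n, ContinuousOn (F n) U := fun n =>
    hf.mul ((hwc.comp_continuousOn hLc).mul ((h1 _ (he0 n)).continuous.comp_continuousOn hPc))
  have hJc : ∀ n, ContinuousOn (J n) U := fun n =>
    hv.continuousOn.mul (((hw1c.comp_continuousOn hLc).mul
      ((h1 _ (he0 n)).continuous.comp_continuousOn hPc)).add ((hw2c.comp_continuousOn hLc).mul
      ((((hηd n).comp_continuousOn hPc).mul hPc).sub ((h1 _ (he0 n)).continuous.comp_continuousOn hPc))))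
  have hFz : ∀ n, ∀ x ∈ U, exp b < ‖x‖ → F n x = 0 := fun n x _ hx => by
    simp [hF, hwz _ (log_off hx)]
  have hJz : ∀ n, ∀ x ∈ U, exp b < ‖x‖ → J n x = 0 := fun n x _ hx => by
    simp [hJ, hw1z _ (log_off hx), hw2z _ (log_off hx)]
  have hFb : ∀ n, ∀ x ∈ U, |F n x| ≤ Cf * (C * 1) := fun n x hx => by
    by_cases hb : ‖x‖ ≤ exp b
    · rw [hF, abs_mul, abs_mul]
      gcongr
      · exact hCf x hx hb
      · exact hC _
      · exact hηb n x hx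
    · rw [hFz n x hx (by linarith), abs_zero]; positivity
  have hJb : ∀ n, ∀ x ∈ U, |J n x| ≤ Cv * (C1 * 1 + C2 * 1) := fun n x hx => by
    by_cases hb : ‖x‖ ≤ exp b
    · rw [hJ, abs_mul]
      gcongr
      · exact hCv x hx hb
      · refine (abs_add_le _ _).trans ?_
        rw [abs_mul (w1 _), abs_mul (w2 _)]
        gcongr
        · exact hC1 _
        · exact hηb n x hx
        · exact hC2 _
        · exact hηb2 n x hx
    · rw [hJz n x hx (by linarith), abs_zero]; positivity
  have hηl : ∀ x ∈ U, Filter.Tendsto (fun n => η (e n) (bigPhi φ x)) Filter.atTop (nhds (bigPhi φ x)) := by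
    intro x hx
    have l1 : Filter.Tendsto (fun n => bigPhi φ x - 2 * e n) Filter.atTop (nhds (bigPhi φ x)) := by
      simpa using (helim.const_mul 2).const_sub (bigPhi φ x)
    refine tendsto_of_tendsto_of_tendsto_of_le_of_le l1 tendsto_const_nhds ?_ ?_
    · exact fun n => (h5 _ (he0 n) _ (hP0 x hx).le).1
    · exact fun n => (h5 _ (he0 n) _ (hP0 x hx).le).2.1
  have hηl2 : ∀ x ∈ U, Filter.Tendsto (fun n => deriv (η (e n)) (bigPhi φ x)) Filter.atTop (nhds 1) := by
    intro x hx
    refine tendsto_const_nhds.congr' ?_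
    have : ∀ᶠ n in Filter.atTop, 2 * e n < bigPhi φ x := by
      have : Filter.Tendsto (fun n => 2 * e n) Filter.atTop (nhds 0) := by
        simpa using helim.const_mul 2
      exact this.eventually_lt_const (hP0 x hx)
    filter_upwards [this] with n hn
    exact (h6 _ (he0 n) _ hn.le).symm
  have LF := tendsto_intOn hU hFc hFb hFz
    (G := fun x => f x * (w (Real.log ‖x‖) * bigPhi φ x))
    (fun x hx => ((hηl x hx).const_mul _).const_mul _)
  have LJ := tendsto_intOn hU hJc hJb hJz
    (G := fun x => v x * (w1 (Real.log ‖x‖) * bigPhi φ x +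
      w2 (Real.log ‖x‖) * (1 * bigPhi φ x - bigPhi φ x)))
    (fun x hx => (((hηl x hx).const_mul _).add
      ((((hηl2 x hx).mul_const _).sub (hηl x hx)).const_mul _)).const_mul _)
  have e2 : ∀ x ∈ U, exp (-2 * Real.log ‖x‖) = (‖x‖ ^ 2)⁻¹ := fun x hx => by
    have hn : 0 < ‖x‖ := hρ.trans hx.1
    rw [show -2 * Real.log ‖x‖ = -(((2 : ℕ) : ℝ) * Real.log ‖x‖) by push_cast; ring, exp_neg, exp_nat_mul,
      exp_log hn]
  have key := le_of_tendsto_of_tendsto' LF LJ fun n => by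
    have hEq : EqOn (J n) (fun x => v x * ((‖x‖ ^ 2)⁻¹ * exp (k * Real.log ‖x‖) *
        (-(deriv (deriv χ) (Real.log ‖x‖) + (2 * k + (N - 2)) * deriv χ (Real.log ‖x‖))
            * η (e n) (bigPhi φ x)
          + lam1 * χ (Real.log ‖x‖) * (deriv (η (e n)) (bigPhi φ x) * bigPhi φ x
            - η (e n) (bigPhi φ x))))) U := by
      intro x hx
      simp only [hJ, hw1, hw2, e2 x hx]; ring
    have := core_eps (b := b) hΩ hphi hρ ha (he0 n) hk hv hv0 hf hineq hχ hχ0 hχs (h1 _ (he0 n))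
      (h2 _ (he0 n)) (fun s hs => (h5 _ (he0 n) s hs).2.2) (h4 _ (he0 n))
      ((intOn_of_bdd hU (hJc n) (hJb n) (hJz n)).congr_fun hEq hU.measurableSet)
    rw [← setIntegral_congr_fun hU.measurableSet hEq] at this
    exact this
  refine key.trans_eq ?_
  refine setIntegral_congr_fun hU.measurableSet fun x hx => ?_
  simp only [hw1, hw2, e2 x hx]; ring

end
end

open MeasureTheory Real Set
open scoped ENNReal NNReal
noncomputable section

theorem exists_bump : ∃ m : ℝ → ℝ, ContDiff ℝ 2 m ∧ (∀ s, 0 ≤ m s) ∧ (∀ s, m s ≤ 1) ∧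
    (∀ s, s ∉ Icc (-1 : ℝ) 1 → m s = 0) ∧ m 0 = 1 := by
  let b : ContDiffBump (0 : ℝ) := ⟨1 / 2, 1, by norm_num, by norm_num⟩
  refine ⟨b, b.contDiff, fun s => b.nonneg, fun s => b.le_one, fun s hs => ?_, ?_⟩
  · apply b.zero_of_le_dist
    show (1 : ℝ) ≤ dist s 0
    rw [Real.dist_eq, sub_zero]
    by_contra h
    exact hs ⟨by linarith [(abs_lt.1 (not_le.1 h)).1], by linarith [(abs_lt.1 (not_le.1 h)).2]⟩
  · exact b.one_of_mem_closedBall (by simp [b])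

section
variable {N : ℕ} {Ω : Set (Euc N)} {lam1 : ℝ} {φ : Euc N → ℝ}

/-- mollified spherical mean -/
def Hm (U : Set (Euc N)) (W : Euc N → ℝ) (m : ℝ → ℝ) (t : ℝ) : ℝ :=
  ∫ x in U, W x * m (t - Real.log ‖x‖)

theorem log_off2 {t s : ℝ} {x : Euc N} (hs : s ≤ t) (h : exp (t + 1) < ‖x‖) :
    s - Real.log ‖x‖ ∉ Icc (-1 : ℝ) 1 := by
  intro h2
  have : Real.log ‖x‖ ≤ t + 1 := by linarith [h2.1]
  have := exp_le_exp.2 this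
  rw [exp_log ((exp_pos _).trans h)] at this
  linarith

theorem Hm_cont {ρ : ℝ} (hρ : 0 < ρ) {W : Euc N → ℝ}
    (hW : ContinuousOn W (coneGT N ρ Ω)) {m : ℝ → ℝ} (hm : Continuous m) (t : ℝ) :
    ContinuousOn (fun x => W x * m (t - Real.log ‖x‖)) (coneGT N ρ Ω) :=
  hW.mul (hm.comp_continuousOn (continuousOn_const.sub (logn_continuousOn hρ)))

theorem Hm_bound {ρ : ℝ} {W : Euc N → ℝ} (hWb : BddLoc (coneGT N ρ Ω) W) {m : ℝ → ℝ}
    (hm : Continuous m) (hmz : ∀ s, s ∉ Icc (-1 : ℝ) 1 → m s = 0) (t : ℝ) :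
    ∃ C, 0 ≤ C ∧ ∀ s ≤ t, ∀ x ∈ coneGT N ρ Ω, |W x * m (s - Real.log ‖x‖)| ≤ C := by
  obtain ⟨C, hC0, hC⟩ := hWb.nn (exp (t + 1))
  obtain ⟨M, hM0, hM⟩ := bdd_of_off hm hmz
  refine ⟨C * M, by positivity, fun s hs x hx => ?_⟩
  by_cases hb : ‖x‖ ≤ exp (t + 1)
  · rw [abs_mul]
    have := hC x hx hb
    have := hM (s - Real.log ‖x‖)
    gcongr
  · rw [hmz _ (log_off2 hs (not_le.1 hb))]; simp; positivity

theorem Hm_int (hΩ : IsConeDomain N Ω) {ρ : ℝ} (hρ : 0 < ρ) {W : Euc N → ℝ}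
    (hW : ContinuousOn W (coneGT N ρ Ω)) (hWb : BddLoc (coneGT N ρ Ω) W) {m : ℝ → ℝ}
    (hm : Continuous m) (hmz : ∀ s, s ∉ Icc (-1 : ℝ) 1 → m s = 0) (t : ℝ) :
    IntegrableOn (fun x => W x * m (t - Real.log ‖x‖)) (coneGT N ρ Ω) := by
  obtain ⟨C, hC0, hC⟩ := Hm_bound hWb hm hmz t
  refine intOn_of_bdd (isOpen_coneGT hρ hΩ) (Hm_cont hρ hW hm t) (hC t le_rfl)
    (R := exp (t + 1)) fun x _ hx => ?_
  rw [hmz _ (log_off2 le_rfl hx), mul_zero]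

theorem Hm_hasDerivAt (hΩ : IsConeDomain N Ω) {ρ : ℝ} (hρ : 0 < ρ) {W : Euc N → ℝ}
    (hW : ContinuousOn W (coneGT N ρ Ω)) (hWb : BddLoc (coneGT N ρ Ω) W) {m : ℝ → ℝ}
    (hm : ContDiff ℝ 1 m) (hmz : ∀ s, s ∉ Icc (-1 : ℝ) 1 → m s = 0) (t : ℝ) :
    HasDerivAt (Hm (coneGT N ρ Ω) W m) (Hm (coneGT N ρ Ω) W (deriv m) t) t := by
  have hU := isOpen_coneGT hρ hΩ
  have hm' : Continuous (deriv m) := hm.continuous_deriv le_rfl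
  have hmz' := deriv_zero_off hmz
  obtain ⟨C, hC0, hC⟩ := Hm_bound hWb hm' hmz' (t + 1)
  have hb : Integrable (indicator (Metric.closedBall (0 : Euc N) (exp (t + 1 + 1))) (fun _ => C))
      (volume.restrict (coneGT N ρ Ω)) :=
    ((integrable_indicator_iff measurableSet_closedBall).2
      (integrableOn_const (measure_closedBall_lt_top.ne))).integrableOn
  refine (hasDerivAt_integral_of_dominated_loc_of_deriv_le (μ := volume.restrict (coneGT N ρ Ω))
    (F := fun s x => W x * m (s - Real.log ‖x‖)) (F' := fun s x => W x * deriv m (s - Real.log ‖x‖))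
    (Metric.ball_mem_nhds t one_pos) ?_ (Hm_int hΩ hρ hW hWb hm.continuous hmz t)
    ((Hm_cont hρ hW hm' t).aestronglyMeasurable hU.measurableSet) ?_ hb ?_).2
  · exact Filter.Eventually.of_forall fun s =>
      (Hm_cont hρ hW hm.continuous s).aestronglyMeasurable hU.measurableSet
  · filter_upwards [ae_restrict_mem hU.measurableSet] with x hx s hs
    have hs' : s ≤ t + 1 := by
      rw [Metric.mem_ball, Real.dist_eq] at hs
      linarith [(abs_lt.1 hs).2]
    by_cases h1 : ‖x‖ ≤ exp (t + 1 + 1)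
    · rw [indicator_of_mem (by simpa using h1)]; exact hC s hs' x hx
    · rw [hmz' _ (log_off2 hs' (not_le.1 h1)), indicator_of_notMem (by simpa using h1)]; simp
  · refine Filter.Eventually.of_forall fun x s _ => ?_
    have h1 : HasDerivAt m (deriv m (s - Real.log ‖x‖)) (s - Real.log ‖x‖) :=
      (hm.differentiable one_ne_zero _).hasDerivAt
    have h2 := h1.comp s ((hasDerivAt_id s).sub_const (Real.log ‖x‖))
    simpa using h2.const_mul (W x)

theorem Hm_pos (hΩ : IsConeDomain N Ω) {ρ : ℝ} (hρ : 0 < ρ) {W : Euc N → ℝ}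
    (hW : ContinuousOn W (coneGT N ρ Ω)) (hWb : BddLoc (coneGT N ρ Ω) W)
    (hWp : ∀ x ∈ coneGT N ρ Ω, 0 < W x) {m : ℝ → ℝ}
    (hm : Continuous m) (hm0 : ∀ s, 0 ≤ m s) (hmz : ∀ s, s ∉ Icc (-1 : ℝ) 1 → m s = 0)
    (hm1 : m 0 = 1) {t : ℝ} (ht : Real.log ρ < t) :
    0 < Hm (coneGT N ρ Ω) W m t := by
  have hU := isOpen_coneGT hρ hΩ
  obtain ⟨ω, hω⟩ := hΩ.2.1.nonempty
  have h1 : ‖ω‖ = 1 := by simpa using hΩ.1 hω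
  have hn : ‖exp t • ω‖ = exp t := by rw [norm_smul, h1, mul_one, Real.norm_of_nonneg (exp_pos _).le]
  have hx : exp t • ω ∈ coneGT N ρ Ω := by
    refine ⟨?_, ?_⟩
    · rw [hn, ← exp_log hρ]; exact exp_lt_exp.2 ht
    · rw [hn, smul_smul, inv_mul_cancel₀ (exp_pos t).ne', one_smul]; exact hω
  unfold Hm
  rw [setIntegral_pos_iff_support_of_nonneg_ae]
  · have hop := (Hm_cont hρ hW hm t).isOpen_inter_preimage hU (isOpen_Ioi (a := (0 : ℝ)))
    refine (hop.measure_pos volume ⟨exp t • ω, hx, ?_⟩).trans_le (measure_mono ?_)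
    · rw [mem_preimage, mem_Ioi, hn, log_exp, sub_self, hm1, mul_one]; exact hWp _ hx
    · rintro y ⟨hy, hy2⟩
      exact ⟨ne_of_gt hy2, hy⟩
  · filter_upwards [ae_restrict_mem hU.measurableSet] with x hx
    exact mul_nonneg (hWp x hx).le (hm0 _)
  · exact Hm_int hΩ hρ hW hWb hm hmz t

/-- weight -/
def wgt (φ : Euc N → ℝ) (k : ℝ) (x : Euc N) : ℝ :=
  (‖x‖ ^ 2)⁻¹ * exp (k * Real.log ‖x‖) * bigPhi φ x

theorem wgt_pos (hphi : DirichletEigenpair N Ω lam1 φ) {ρ k : ℝ} (hρ : 0 < ρ) {x : Euc N}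
    (hx : x ∈ coneGT N ρ Ω) : 0 < wgt φ k x := by
  have h1 := bigPhi_pos hphi (coneGT_sub hρ hx)
  have : 0 < ‖x‖ := hρ.trans hx.1
  unfold wgt; positivity

theorem wgt_continuousOn (hΩ : IsConeDomain N Ω) (hphi : DirichletEigenpair N Ω lam1 φ)
    {ρ k : ℝ} (hρ : 0 < ρ) : ContinuousOn (wgt φ k) (coneGT N ρ Ω) := by
  refine ContinuousOn.mul (ContinuousOn.mul (ContinuousOn.inv₀ (by fun_prop) ?_) ?_)
    (bigPhi_continuousOn hΩ hphi hρ)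
  · intro x hx
    have : 0 < ‖x‖ := hρ.trans hx.1
    positivity
  · exact (continuousOn_const.mul (logn_continuousOn hρ)).rexp

theorem wgt_bdd (hphi : DirichletEigenpair N Ω lam1 φ) {ρ : ℝ} (k : ℝ) (hρ : 0 < ρ) :
    BddLoc (coneGT N ρ Ω) (wgt φ k) := by
  intro R
  refine ⟨(ρ ^ 2)⁻¹ * exp (|k| * (|Real.log ρ| + |Real.log R|)) * 1, fun x hx hR => ?_⟩
  have hn : 0 < ‖x‖ := hρ.trans hx.1
  rw [abs_of_pos (wgt_pos hphi hρ hx)]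
  unfold wgt
  have h1 := bigPhi_pos hphi (coneGT_sub hρ hx)
  have h2 := bigPhi_le hphi (coneGT_sub hρ hx)
  have h3 : |Real.log ‖x‖| ≤ |Real.log ρ| + |Real.log R| := by
    have a1 := Real.log_le_log hρ hx.1.le
    have a2 := Real.log_le_log hn hR
    have := neg_abs_le (Real.log ρ)
    have := le_abs_self (Real.log R)
    have := abs_nonneg (Real.log ρ)
    have := abs_nonneg (Real.log R)
    rw [abs_le]; constructor <;> linarith
  have h4 : k * Real.log ‖x‖ ≤ |k| * (|Real.log ρ| + |Real.log R|) :=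
    (le_abs_self _).trans (by rw [abs_mul]; gcongr)
  have := hx.1.le
  gcongr

theorem BddLoc.mul {U : Set (Euc N)} {v w : Euc N → ℝ} (hv : BddLoc U v) (hw : BddLoc U w) :
    BddLoc U (fun x => v x * w x) := by
  intro R
  obtain ⟨C, h0, h⟩ := hv.nn R
  obtain ⟨C', h0', h'⟩ := hw.nn R
  refine ⟨C * C', fun x hx hR => ?_⟩
  rw [abs_mul]
  have := h x hx hR
  have := h' x hx hR
  gcongr

theorem Hm_ode (hΩ : IsConeDomain N Ω) (hphi : DirichletEigenpair N Ω lam1 φ)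
    {ρ k μ : ℝ} (hρ : 0 < ρ)
    (hk : k * (k + (N - 2)) = lam1 - μ) {v f : Euc N → ℝ}
    (hv : ContDiffOn ℝ 2 v (coneGT N ρ Ω)) (hv0 : ∀ x ∈ coneGT N ρ Ω, 0 ≤ v x)
    (hvb : BddLoc (coneGT N ρ Ω) v) (hfb : BddLoc (coneGT N ρ Ω) f)
    (hf : ContinuousOn f (coneGT N ρ Ω))
    (hineq : ∀ x ∈ coneGT N ρ Ω, f x ≤ -lap N v x - μ / ‖x‖ ^ 2 * v x)
    {m : ℝ → ℝ} (hm : ContDiff ℝ 2 m) (hm0 : ∀ s, 0 ≤ m s)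
    (hmz : ∀ s, s ∉ Icc (-1 : ℝ) 1 → m s = 0) :
    ∃ H1 H2 : ℝ → ℝ, (∀ t, HasDerivAt (Hm (coneGT N ρ Ω) (fun x => v x * wgt φ k x) m) (H1 t) t) ∧
      (∀ t, HasDerivAt H1 (H2 t) t) ∧ ∀ t, Real.log ρ + 1 < t →
      H2 t ≤ (2 * k + (N - 2)) * H1 t -
        Hm (coneGT N ρ Ω) (fun x => f x * (‖x‖ ^ 2 * wgt φ k x)) m t := by
  have hU := isOpen_coneGT hρ hΩ
  have hm1 : ContDiff ℝ 1 (deriv m) := by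
    have : ContDiff ℝ (1 + 1) m := by simpa [one_add_one_eq_two] using hm
    exact (contDiff_succ_iff_deriv.1 this).2.2
  have hmz1 := deriv_zero_off hmz
  have hmz2 := deriv_zero_off hmz1
  have hWc : ContinuousOn (fun x => v x * wgt φ k x) (coneGT N ρ Ω) :=
    hv.continuousOn.mul (wgt_continuousOn (k := k) hΩ hphi hρ)
  have hWb := hvb.mul (wgt_bdd hphi k hρ)
  refine ⟨Hm (coneGT N ρ Ω) (fun x => v x * wgt φ k x) (deriv m),
    Hm (coneGT N ρ Ω) (fun x => v x * wgt φ k x) (deriv (deriv m)),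
    Hm_hasDerivAt hΩ hρ hWc hWb (hm.of_le (by norm_num)) hmz,
    Hm_hasDerivAt hΩ hρ hWc hWb hm1 hmz1, fun t ht => ?_⟩
  have d1 : deriv (fun s => m (t - s)) = fun s => -deriv m (t - s) := by
    funext s; exact deriv_comp_const_sub m t s
  have d2 : deriv (deriv (fun s => m (t - s))) = fun s => deriv (deriv m) (t - s) := by
    rw [d1]; funext s
    rw [deriv.fun_neg, deriv_comp_const_sub (deriv m) t s, neg_neg]
  have := core_lim (a := t - 1) (b := t + 1) hΩ hphi hρ (by linarith) hk hv hv0 hvb hfb hf hineq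
    (χ := fun s => m (t - s)) (hm.comp (by fun_prop)) (fun s => hm0 _) (fun s hs => hmz _ fun h =>
      hs ⟨by linarith [h.2], by linarith [h.1]⟩)
  rw [d2, d1] at this
  have i1 := Hm_int hΩ hρ hWc hWb hm1.continuous hmz1 t
  have i2 := Hm_int hΩ hρ hWc hWb (hm1.continuous_deriv le_rfl) hmz2 t
  have e1 : Hm (coneGT N ρ Ω) (fun x => f x * (‖x‖ ^ 2 * wgt φ k x)) m t =
    ∫ x in coneGT N ρ Ω, f x * (exp (k * Real.log ‖x‖) * m (t - Real.log ‖x‖) * bigPhi φ x) := by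
    refine setIntegral_congr_fun hU.measurableSet fun x hx => ?_
    have hn : 0 < ‖x‖ := hρ.trans hx.1
    simp only [wgt]; field_simp
  have e2 : (2 * k + (N - 2)) * Hm (coneGT N ρ Ω) (fun x => v x * wgt φ k x) (deriv m) t -
      Hm (coneGT N ρ Ω) (fun x => v x * wgt φ k x) (deriv (deriv m)) t =
      ∫ x in coneGT N ρ Ω, v x * ((‖x‖ ^ 2)⁻¹ * exp (k * Real.log ‖x‖) *
        (-(deriv (deriv m) (t - Real.log ‖x‖) + (2 * k + (N - 2)) * -deriv m (t - Real.log ‖x‖))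
            * bigPhi φ x)) := by
    unfold Hm
    rw [← integral_const_mul, ← integral_sub (i1.const_mul _) i2]
    refine setIntegral_congr_fun hU.measurableSet fun x hx => ?_
    simp only [wgt]; ring
  linarith

end
end

open MeasureTheory Real Set
open scoped ENNReal NNReal
noncomputable section

/-- Gronwall-type comparison. -/
theorem ode_aux {D B t1 : ℝ} {H1 H2 : ℝ → ℝ}
    (hH1 : ∀ t, HasDerivAt H1 (H2 t) t)
    (h2 : ∀ t, t1 ≤ t → H2 t ≤ D * (H1 t - B)) : ∀ t, t1 ≤ t →
      H1 t - B ≤ (H1 t1 - B) * exp (D * (t - t1)) := by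
  intro t ht
  set F : ℝ → ℝ := fun t => (H1 t - B) * exp (-(D * t)) with hF
  have hFd : ∀ t, HasDerivAt F (H2 t * exp (-(D * t)) + (H1 t - B) * (exp (-(D * t)) * (-D))) t := by
    intro t
    have e : HasDerivAt (fun t => exp (-(D * t))) (exp (-(D * t)) * (-D)) t := by
      have := ((hasDerivAt_id t).const_mul D).neg.exp
      simpa using this
    exact ((hH1 t).sub_const B).mul e
  have hanti : AntitoneOn F (Ici t1) := by
    refine antitoneOn_of_deriv_nonpos (convex_Ici _)
      (fun t _ => (hFd t).continuousAt.continuousWithinAt)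
      (fun t _ => (hFd t).differentiableAt.differentiableWithinAt) ?_
    intro t ht
    rw [interior_Ici] at ht
    rw [(hFd t).deriv]
    have := h2 t (le_of_lt ht)
    have e0 := exp_pos (-(D * t))
    nlinarith
  have := hanti (mem_Ici.2 le_rfl) (mem_Ici.2 ht) ht
  simp only [hF] at this
  have e1 : exp (D * (t - t1)) = exp (D * t) * exp (-(D * t1)) := by rw [← exp_add]; ring_nf
  have e2 : exp (D * t) * exp (-(D * t)) = 1 := by rw [← exp_add]; simp
  calc H1 t - B = ((H1 t - B) * exp (-(D * t))) * exp (D * t) := by rw [mul_assoc, mul_comm (exp (-(D*t))), e2, mul_one]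
    _ ≤ ((H1 t1 - B) * exp (-(D * t1))) * exp (D * t) := by gcongr
    _ = _ := by rw [e1]; ring

/-- derivative eventually at most a negative constant contradicts positivity -/
theorem pos_contra {t1 c : ℝ} {H H1 : ℝ → ℝ} (hH : ∀ t, HasDerivAt H (H1 t) t) (hc : 0 < c)
    (h1 : ∀ t, t1 ≤ t → H1 t ≤ -c) (hpos : ∀ t, t1 ≤ t → 0 < H t) : False := by
  set F : ℝ → ℝ := fun t => H t + c * t with hF
  have hFd : ∀ t, HasDerivAt F (H1 t + c) t := fun t => by
    have := (hH t).fun_add ((hasDerivAt_id t).const_mul c)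
    rw [mul_one] at this
    exact this
  have hanti : AntitoneOn F (Ici t1) := by
    refine antitoneOn_of_deriv_nonpos (convex_Ici _)
      (fun t _ => (hFd t).continuousAt.continuousWithinAt)
      (fun t _ => (hFd t).differentiableAt.differentiableWithinAt) ?_
    intro t ht
    rw [interior_Ici] at ht
    rw [(hFd t).deriv]
    linarith [h1 t (le_of_lt ht)]
  have h0 := hpos t1 le_rfl
  set T := t1 + H t1 / c
  have hT : t1 ≤ T := le_add_of_nonneg_right (by positivity)
  have := hanti (mem_Ici.2 le_rfl) (mem_Ici.2 hT) hT
  have h2 := hpos T hT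
  simp only [hF] at this
  have : c * T = c * t1 + H t1 := by simp only [T]; field_simp
  linarith

theorem ode_mono {D t0 : ℝ} {H H1 H2 : ℝ → ℝ} (hH : ∀ t, HasDerivAt H (H1 t) t)
    (hH1 : ∀ t, HasDerivAt H1 (H2 t) t) (hD : 0 ≤ D) (hpos : ∀ t, t0 < t → 0 < H t)
    (h2 : ∀ t, t0 < t → H2 t ≤ D * H1 t) : ∀ t, t0 < t → 0 ≤ H1 t := by
  intro t1 ht1
  by_contra hlt
  push Not at hlt
  have := ode_aux (t1 := t1) (D := D) (B := 0) hH1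
    (fun t ht => by simpa using h2 t (by linarith))
  refine pos_contra (t1 := t1) (c := -H1 t1) hH (by linarith) (fun t ht => ?_) (fun t ht => hpos t (by linarith))
  have h := this t ht
  have e : 1 ≤ exp (D * (t - t1)) := one_le_exp (mul_nonneg hD (by linarith))
  nlinarith

theorem ode_blowup {D t0 c q : ℝ} {H H1 H2 : ℝ → ℝ} (hH : ∀ t, HasDerivAt H (H1 t) t)
    (hH1 : ∀ t, HasDerivAt H1 (H2 t) t) (hD' : 0 ≤ D) (hc : 0 < c) (hq : 1 < q)
    (hpos : ∀ t, t0 < t → 0 < H t)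
    (h2' : ∀ t, t0 < t → H2 t ≤ D * H1 t - c * H t ^ q) : False := by
  have hmono' := ode_mono hH hH1 hD' hpos fun t ht => by
    have := h2' t ht
    have := rpow_pos_of_pos (hpos t ht) q
    nlinarith
  obtain ⟨D, hD, h2⟩ : ∃ D, 0 < D ∧ ∀ t, t0 < t → H2 t ≤ D * H1 t - c * H t ^ q :=
    ⟨D + 1, by linarith, fun t ht => by linarith [h2' t ht, hmono' t ht]⟩
  have hHm : MonotoneOn H (Ioi t0) := by
    refine monotoneOn_of_deriv_nonneg (convex_Ioi _)
      (fun t _ => (hH t).continuousAt.continuousWithinAt)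
      (fun t _ => (hH t).differentiableAt.differentiableWithinAt) ?_
    intro t ht
    rw [interior_Ioi] at ht
    rw [(hH t).deriv]; exact hmono' t ht
  have hlow : ∀ t1, t0 < t1 → c / D * H t1 ^ q ≤ H1 t1 := by
    intro t1 ht1
    by_contra hlt
    push Not at hlt
    set B := c / D * H t1 ^ q with hB
    have hB0 : 0 ≤ B := by have := hpos t1 ht1; positivity
    have hDB : D * B = c * H t1 ^ q := by rw [hB]; field_simp
    have := ode_aux (t1 := t1) (D := D) (B := B) hH1 (fun t ht => by
      have a1 := h2 t (by linarith)
      have a2 : H t1 ^ q ≤ H t ^ q := rpow_le_rpow (hpos t1 ht1).le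
        (hHm (mem_Ioi.2 ht1) (mem_Ioi.2 (by linarith)) ht) (by linarith)
      nlinarith)
    set d := B - H1 t1 with hd
    have hd0 : 0 < d := by simp only [hd]; linarith
    -- choose t with d * exp > B + 1
    set t := t1 + (B + 1) / (d * D) with htdef
    have ht : t1 ≤ t := le_add_of_nonneg_right (by positivity)
    have h := this t ht
    have e : D * (t - t1) + 1 ≤ exp (D * (t - t1)) := add_one_le_exp _
    have e2 : D * (t - t1) = (B + 1) / d := by rw [htdef]; field_simp; ring
    rw [e2] at e h
    have e3 : d * ((B + 1) / d) = B + 1 := by field_simp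
    have := hmono' t (by linarith)
    have : H1 t1 - B = -d := by simp only [hd]; ring
    nlinarith
  set c' := c / D with hc'
  have hc'0 : 0 < c' := by positivity
  -- G = H^(1-q)
  set G : ℝ → ℝ := fun t => H t ^ (1 - q) + (q - 1) * c' * t with hG
  have hGd : ∀ t, t0 < t → HasDerivAt G (H1 t * (1 - q) * H t ^ (1 - q - 1) + (q - 1) * c') t := by
    intro t ht
    have := ((hH t).rpow_const (p := 1 - q) (Or.inl (hpos t ht).ne')).fun_add
      ((hasDerivAt_id t).const_mul ((q - 1) * c'))
    rw [mul_one] at this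
    exact this
  have hanti : AntitoneOn G (Ioi t0) := by
    refine antitoneOn_of_deriv_nonpos (convex_Ioi _)
      (fun t ht => (hGd t ht).continuousAt.continuousWithinAt)
      (fun t ht => (hGd t (interior_subset ht)).differentiableAt.differentiableWithinAt) ?_
    intro t ht
    rw [interior_Ioi] at ht
    rw [(hGd t ht).deriv]
    have a := hlow t ht
    have hp := hpos t ht
    have e : H t ^ (1 - q - 1) * H t ^ q = 1 := by rw [← rpow_add hp]; simp
    have h3 : 0 < H t ^ (1 - q - 1) := rpow_pos_of_pos hp _
    have h4 : c' ≤ H1 t * H t ^ (1 - q - 1) := by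
      calc c' = c' * H t ^ q * H t ^ (1 - q - 1) := by rw [mul_assoc, mul_comm (H t ^ q), e, mul_one]
        _ ≤ _ := by gcongr
    nlinarith
  set s := t0 + 1
  set T := s + H s ^ (1 - q) / ((q - 1) * c') with hT
  have hq1 : 0 < q - 1 := by linarith
  have hs : t0 < s := by simp [s]
  have hsp := rpow_pos_of_pos (hpos s hs) (1 - q)
  have hsT : s ≤ T := le_add_of_nonneg_right (by positivity)
  have h := hanti (mem_Ioi.2 hs) (mem_Ioi.2 (hs.trans_le hsT)) hsT
  simp only [hG] at h
  have e : (q - 1) * c' * T = (q - 1) * c' * s + H s ^ (1 - q) := by rw [hT]; field_simp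
  have := rpow_pos_of_pos (hpos T (hs.trans_le hsT)) (1 - q)
  linarith

end

open MeasureTheory Real Set
open scoped ENNReal NNReal
noncomputable section

section
variable {N : ℕ} {Ω : Set (Euc N)} {lam1 : ℝ} {φ : Euc N → ℝ}

/-- logarithmic annulus -/
def ann (N : ℕ) (t : ℝ) : Set (Euc N) := {x | Real.log ‖x‖ ∈ Icc (t - 1) (t + 1)}

theorem measurableSet_ann (t : ℝ) : MeasurableSet (ann N t) :=
  (Real.measurable_log.comp measurable_norm) measurableSet_Icc

theorem ann_vol {ρ : ℝ} (hρ : 0 < ρ) (t : ℝ) : volume (ann N t ∩ coneGT N ρ Ω) ≤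
    ENNReal.ofReal (exp (N * (t + 1)) * (volume (Metric.ball (0 : Euc N) 1)).toReal) := by
  have h1 : ann N t ∩ coneGT N ρ Ω ⊆ Metric.closedBall 0 (exp (t + 1)) := by
    rintro x ⟨hx, hx2⟩
    have hn : 0 < ‖x‖ := hρ.trans hx2.1
    rw [mem_closedBall_zero_iff, ← exp_log hn]
    exact exp_le_exp.2 hx.2
  refine (measure_mono h1).trans ?_
  rw [Measure.addHaar_closedBall _ _ (exp_pos _).le, ENNReal.ofReal_mul (exp_pos _).le,
    ENNReal.ofReal_toReal measure_ball_lt_top.ne, finrank_euclideanSpace_fin, ← exp_nat_mul]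

theorem wgt_eq {g : ℝ} {x : Euc N} (hx : x ≠ 0) :
    wgt φ (g - (N - 2)) x = exp (g * Real.log ‖x‖) * exp (-(N * Real.log ‖x‖)) * bigPhi φ x := by
  have hn : 0 < ‖x‖ := by simpa using hx
  have e2 : exp (-(2 * Real.log ‖x‖)) = (‖x‖ ^ 2)⁻¹ := by
    rw [show -(2 * Real.log ‖x‖) = -(((2 : ℕ) : ℝ) * Real.log ‖x‖) by push_cast; ring, exp_neg, exp_nat_mul,
      exp_log hn]
  rw [wgt, ← e2, ← exp_add, ← exp_add]
  ring_nf

theorem rpow_split {y a p : ℝ} (hy : 0 < y) (hy1 : y ≤ 1) (ha : 0 < a) (hp : 0 < p) :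
    y ≤ a + a ^ (-p) * y ^ p := by
  by_cases h : y ≤ a
  · have : 0 < a ^ (-p) * y ^ p := by positivity
    linarith
  · push Not at h
    have : 1 ≤ a ^ (-p) * y ^ p := by
      rw [rpow_neg ha.le, ← div_eq_inv_mul, ← div_rpow hy.le ha.le]
      exact one_le_rpow (by rw [le_div_iff₀ ha]; linarith) hp.le
    linarith

theorem stepA (hΩ : IsConeDomain N Ω) (hphi : DirichletEigenpair N Ω lam1 φ)
    {ρ g μ p : ℝ} (hρ : 0 < ρ) (hg : 0 < g) (hgk : g * (g - (N - 2)) = lam1 - μ)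
    (hD : 0 ≤ 2 * g - (N - 2)) (hp : 0 < p) {u : Euc N → ℝ}
    (hu : ContDiffOn ℝ 2 u (coneGT N ρ Ω)) (hu0 : ∀ x ∈ coneGT N ρ Ω, 0 < u x)
    (hineq : ∀ x ∈ coneGT N ρ Ω, 0 ≤ -lap N u x - μ / ‖x‖ ^ 2 * u x) :
    ∃ c t1 : ℝ, 0 < c ∧ ∀ t, t1 ≤ t → ENNReal.ofReal (c * exp ((N - p * g) * t)) ≤
      ∫⁻ x in ann N t ∩ coneGT N ρ Ω, ENNReal.ofReal (u x ^ p) := by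
  have hU := isOpen_coneGT hρ hΩ
  set V : Euc N → ℝ := fun x => ‖x‖ ^ (-g) * bigPhi φ x with hVdef
  set v : Euc N → ℝ := fun x => u x * V x / (u x + V x) with hvdef
  have hne : ∀ x ∈ coneGT N ρ Ω, x ≠ 0 := fun x hx => (coneGT_sub hρ hx).1
  have hn : ∀ x ∈ coneGT N ρ Ω, 0 < ‖x‖ := fun x hx => hρ.trans hx.1
  have hV0 : ∀ x ∈ coneGT N ρ Ω, 0 < V x := fun x hx =>
    mul_pos (rpow_pos_of_pos (hn x hx) _) (bigPhi_pos hphi (coneGT_sub hρ hx))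
  have hVd : ∀ x ∈ coneGT N ρ Ω, ContDiffAt ℝ 2 V x := fun x hx =>
    rpowPhi_contDiffAt hΩ hphi (coneGT_sub hρ hx) _
  have hud : ∀ x ∈ coneGT N ρ Ω, ContDiffAt ℝ 2 u x := fun x hx => hu.contDiffAt (hU.mem_nhds hx)
  have hv : ContDiffOn ℝ 2 v (coneGT N ρ Ω) := fun x hx =>
    (((hud x hx).mul (hVd x hx)).div ((hud x hx).add (hVd x hx))
      (by have := hu0 x hx; have := hV0 x hx; show u x + V x ≠ 0; linarith)).contDiffWithinAt
  have hv0 : ∀ x ∈ coneGT N ρ Ω, 0 < v x := fun x hx => by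
    have := hu0 x hx; have := hV0 x hx; simp only [hvdef]; positivity
  have hvu : ∀ x ∈ coneGT N ρ Ω, v x ≤ u x := fun x hx => by
    have := hu0 x hx; have := hV0 x hx
    simp only [hvdef]; rw [div_le_iff₀ (by positivity)]; nlinarith
  have hvV : ∀ x ∈ coneGT N ρ Ω, v x ≤ exp (-(g * Real.log ‖x‖)) := fun x hx => by
    have h1 := hu0 x hx; have h2 := hV0 x hx
    have h3 : v x ≤ V x := by
      simp only [hvdef]; rw [div_le_iff₀ (by positivity)]; nlinarith
    refine h3.trans ?_
    simp only [hVdef]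
    rw [rpow_eq_exp_log (hne x hx), neg_mul]
    have := bigPhi_le hphi (coneGT_sub hρ hx)
    have := exp_pos (-(g * Real.log ‖x‖))
    nlinarith
  have hvb : BddLoc (coneGT N ρ Ω) v := fun R => ⟨exp (-(g * Real.log ρ)), fun x hx _ => by
    rw [abs_of_pos (hv0 x hx)]
    refine (hvV x hx).trans (exp_le_exp.2 ?_)
    have := Real.log_le_log hρ hx.1.le
    nlinarith⟩
  have hvineq : ∀ x ∈ coneGT N ρ Ω, 0 ≤ -lap N v x - μ / ‖x‖ ^ 2 * v x := by
    intro x hx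
    have h1 := lap_harm (hud x hx) (hVd x hx) (hu0 x hx) (hV0 x hx)
    have h2 : lap N V x = -(μ / ‖x‖ ^ 2) * V x := by
      have := lap_rpowPhi hΩ hphi (coneGT_sub hρ hx) (-g)
      rw [hVdef, this]
      have : -g * (-g + (N - 2)) - lam1 = -μ := by linarith
      rw [this]; ring
    have h3 := hineq x hx
    have hu' := hu0 x hx
    have hV' := hV0 x hx
    rw [h2] at h1
    have h4 : v x = u x * (V x / (u x + V x)) ^ 2 + V x * (u x / (u x + V x)) ^ 2 := by
      simp only [hvdef]; field_simp; ring
    have h5 : 0 ≤ (V x / (u x + V x)) ^ 2 := by positivity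
    have h6 : lap N v x ≤ _ := h1
    rw [h4]
    nlinarith [mul_nonneg h3 h5]
  obtain ⟨m, hm, hm0, hm1, hmz, hm00⟩ := exists_bump
  have hk : (g - (N - 2)) * ((g - (N - 2)) + (N - 2)) = lam1 - μ := by rw [← hgk]; ring
  obtain ⟨H1, H2, hH1, hH2, hode⟩ := Hm_ode hΩ hphi hρ hk hv (fun x hx => (hv0 x hx).le) hvb
    (f := fun _ => 0) (fun R => ⟨0, by simp⟩) continuousOn_const hvineq hm hm0 hmz
  set W : Euc N → ℝ := fun x => v x * wgt φ (g - (N - 2)) x with hW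
  have hWc : ContinuousOn W (coneGT N ρ Ω) := hv.continuousOn.mul (wgt_continuousOn hΩ hphi hρ)
  have hWb : BddLoc (coneGT N ρ Ω) W := hvb.mul (wgt_bdd hphi _ hρ)
  have hWp : ∀ x ∈ coneGT N ρ Ω, 0 < W x := fun x hx => mul_pos (hv0 x hx) (wgt_pos hphi hρ hx)
  set H := Hm (coneGT N ρ Ω) W m with hH
  have hHp : ∀ t, Real.log ρ + 1 < t → 0 < H t := fun t ht =>
    Hm_pos hΩ hρ hWc hWb hWp hm.continuous hm0 hmz hm00 (by linarith)
  have hH1p := ode_mono hH1 hH2 hD hHp fun t ht => by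
    have := hode t ht
    simp only [Hm, zero_mul, integral_zero, sub_zero] at this
    linarith
  have hHm : MonotoneOn H (Ioi (Real.log ρ + 1)) := by
    refine monotoneOn_of_deriv_nonneg (convex_Ioi _)
      (fun t _ => (hH1 t).continuousAt.continuousWithinAt)
      (fun t _ => (hH1 t).differentiableAt.differentiableWithinAt) ?_
    intro t ht
    rw [interior_Ioi] at ht
    rw [(hH1 t).deriv]; exact hH1p t ht
  set t1 := Real.log ρ + 2 with ht1
  have ht1' : Real.log ρ + 1 < t1 := by linarith
  set c0 := H t1 with hc0
  have hc00 : 0 < c0 := hHp t1 ht1'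
  set ω := (volume (Metric.ball (0 : Euc N) 1)).toReal with hω
  have hω0 : 0 < ω := ENNReal.toReal_pos (Metric.measure_ball_pos _ _ one_pos).ne' measure_ball_lt_top.ne
  set a := c0 / (2 * ω * exp (2 * N)) with ha
  have ha0 : 0 < a := by positivity
  refine ⟨c0 / 2 * (exp (-N) * a ^ p * exp (-(p * g))), t1, by positivity, fun t ht => ?_⟩
  set I := ∫⁻ x in ann N t ∩ coneGT N ρ Ω, ENNReal.ofReal (u x ^ p) with hI
  by_cases hIt : I = ⊤
  · rw [hIt]; exact le_top
  set A := exp (-(N * (t - 1))) * a with hA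
  set B := exp (-(N * (t - 1))) * (a ^ (-p) * exp (p * g * (t + 1))) with hB
  have hA0 : 0 < A := by positivity
  have hB0 : 0 < B := by positivity
  have hpt : ∀ x ∈ coneGT N ρ Ω, ENNReal.ofReal (W x * m (t - Real.log ‖x‖)) ≤
      (ann N t).indicator (fun x => ENNReal.ofReal A + ENNReal.ofReal B * ENNReal.ofReal (u x ^ p)) x := by
    intro x hx
    by_cases hxa : x ∈ ann N t
    · rw [indicator_of_mem hxa, ← ENNReal.ofReal_mul hB0.le, ← ENNReal.ofReal_add hA0.le
        (mul_nonneg hB0.le (rpow_nonneg (hu0 x hx).le _))]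
      refine ENNReal.ofReal_le_ofReal ?_
      have hW0 := hWp x hx
      have e1 : W x * m (t - Real.log ‖x‖) ≤ W x := mul_le_of_le_one_right hW0.le (hm1 _)
      refine e1.trans ?_
      set y := v x * exp (g * Real.log ‖x‖) with hy
      have hy0 : 0 < y := mul_pos (hv0 x hx) (exp_pos _)
      have hy1 : y ≤ 1 := by
        have := mul_le_mul_of_nonneg_right (hvV x hx) (exp_pos (g * Real.log ‖x‖)).le
        rwa [← exp_add, neg_add_cancel, exp_zero] at this
      have hys := rpow_split hy0 hy1 ha0 hp
      have e2 : W x ≤ exp (-(N * (t - 1))) * y := by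
        simp only [hW]
        rw [wgt_eq (hne x hx)]
        have b1 := bigPhi_le hphi (coneGT_sub hρ hx)
        have b0 := bigPhi_pos hphi (coneGT_sub hρ hx)
        have b2 : exp (-(N * Real.log ‖x‖)) ≤ exp (-(N * (t - 1))) := by
          refine exp_le_exp.2 (neg_le_neg ?_)
          have := hxa.1
          gcongr
        calc v x * (exp (g * Real.log ‖x‖) * exp (-(N * Real.log ‖x‖)) * bigPhi φ x)
            = (exp (-(N * Real.log ‖x‖)) * bigPhi φ x) * y := by rw [hy]; ring
          _ ≤ (exp (-(N * (t - 1))) * 1) * y := by gcongr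
          _ = _ := by ring
      have e3 : y ^ p ≤ u x ^ p * exp (p * g * (t + 1)) := by
        rw [hy, mul_rpow (hv0 x hx).le (exp_pos _).le]
        have b1 : v x ^ p ≤ u x ^ p := rpow_le_rpow (hv0 x hx).le (hvu x hx) hp.le
        have b2 : exp (g * Real.log ‖x‖) ^ p ≤ exp (p * g * (t + 1)) := by
          rw [← exp_mul]
          refine exp_le_exp.2 ?_
          have := hxa.2
          have : p * g * Real.log ‖x‖ ≤ p * g * (t + 1) := by gcongr
          linarith
        have := rpow_nonneg (hu0 x hx).le p
        gcongr
      calc W x ≤ exp (-(N * (t - 1))) * y := e2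
        _ ≤ exp (-(N * (t - 1))) * (a + a ^ (-p) * y ^ p) := by gcongr
        _ ≤ exp (-(N * (t - 1))) * (a + a ^ (-p) * (u x ^ p * exp (p * g * (t + 1)))) := by gcongr
        _ = A + B * u x ^ p := by rw [hA, hB]; ring
    · rw [indicator_of_notMem hxa, hmz, mul_zero, ENNReal.ofReal_zero]
      intro h
      exact hxa ⟨by linarith [h.2], by linarith [h.1]⟩
  have hmain : ENNReal.ofReal (H t) ≤ ENNReal.ofReal (c0 / 2) + ENNReal.ofReal B * I := by
    rw [hH, Hm, ofReal_integral_eq_lintegral_ofReal (Hm_int hΩ hρ hWc hWb hm.continuous hmz t)]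
    · refine (setLIntegral_mono' hU.measurableSet hpt).trans ?_
      rw [lintegral_indicator (measurableSet_ann t), Measure.restrict_restrict (measurableSet_ann t),
        lintegral_add_left measurable_const, lintegral_const, Measure.restrict_apply_univ,
        lintegral_const_mul' _ _ ENNReal.ofReal_ne_top]
      gcongr
      refine (mul_le_mul_right (ann_vol hρ t) _).trans ?_
      rw [← ENNReal.ofReal_mul hA0.le]
      refine ENNReal.ofReal_le_ofReal (le_of_eq ?_)
      have ee : exp (-(N * (t - 1))) * exp (N * (t + 1)) = exp (2 * N) := by
        rw [← exp_add]; ring_nf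
      calc A * (exp (N * (t + 1)) * ω) = (exp (-(N * (t - 1))) * exp (N * (t + 1))) * a * ω := by
            rw [hA]; ring
        _ = c0 / 2 := by rw [ee, ha]; field_simp
    · filter_upwards [ae_restrict_mem hU.measurableSet] with x hx
      exact mul_nonneg (hWp x hx).le (hm0 _)
  have hi : I = ENNReal.ofReal I.toReal := (ENNReal.ofReal_toReal hIt).symm
  rw [hi, ← ENNReal.ofReal_mul hB0.le, ← ENNReal.ofReal_add (by positivity) (by positivity),
    ENNReal.ofReal_le_ofReal_iff (by positivity)] at hmain
  rw [hi]
  refine ENNReal.ofReal_le_ofReal ?_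
  have hc : c0 ≤ H t := hHm (mem_Ioi.2 ht1') (mem_Ioi.2 (by linarith)) ht
  have hBi : c0 / 2 ≤ B * I.toReal := by linarith
  have hBinv : exp (-N) * a ^ p * exp (-(p * g)) * exp ((N - p * g) * t) * B = 1 := by
    rw [hB, rpow_neg ha0.le]
    have : exp (-N) * a ^ p * exp (-(p * g)) * exp ((N - p * g) * t) *
      (exp (-(N * (t - 1))) * ((a ^ p)⁻¹ * exp (p * g * (t + 1)))) =
      (exp (-N) * exp (-(p * g)) * exp ((N - p * g) * t) * exp (-(N * (t - 1))) * exp (p * g * (t + 1))) *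
        (a ^ p * (a ^ p)⁻¹) := by ring
    rw [this, mul_inv_cancel₀ (rpow_pos_of_pos ha0 p).ne', mul_one, ← exp_add, ← exp_add, ← exp_add,
      ← exp_add, exp_eq_one_iff]
    ring
  calc c0 / 2 * (exp (-N) * a ^ p * exp (-(p * g))) * exp ((N - p * g) * t)
      = (exp (-N) * a ^ p * exp (-(p * g)) * exp ((N - p * g) * t)) * (c0 / 2) := by ring
    _ ≤ (exp (-N) * a ^ p * exp (-(p * g)) * exp ((N - p * g) * t)) * (B * I.toReal) := by gcongr
    _ = I.toReal := by rw [← mul_assoc, hBinv, one_mul]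

end
end

open MeasureTheory Real Set
open scoped ENNReal NNReal
noncomputable section

section
variable {N : ℕ} {Ω : Set (Euc N)} {lam1 : ℝ} {φ : Euc N → ℝ}

theorem wgt_mass (hΩ : IsConeDomain N Ω) (hphi : DirichletEigenpair N Ω lam1 φ)
    {ρ g : ℝ} (hρ : 0 < ρ) (hg : 0 < g) {m : ℝ → ℝ} (hm : Continuous m) (hm0 : ∀ s, 0 ≤ m s)
    (hm1 : ∀ s, m s ≤ 1)
    (hmz : ∀ s, s ∉ Icc (-1 : ℝ) 1 → m s = 0) : ∃ C, 0 < C ∧ ∀ t,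
    Hm (coneGT N ρ Ω) (wgt φ (g - (N - 2))) m t ≤ C * exp (g * t) := by
  have hU := isOpen_coneGT hρ hΩ
  set ω := (volume (Metric.ball (0 : Euc N) 1)).toReal with hω
  have hω0 : 0 < ω := ENNReal.toReal_pos (Metric.measure_ball_pos _ _ one_pos).ne' measure_ball_lt_top.ne
  refine ⟨exp (g + 2 * N) * ω, by positivity, fun t => ?_⟩
  have hwc : ContinuousOn (wgt φ (g - (N - 2))) (coneGT N ρ Ω) := wgt_continuousOn hΩ hphi hρ
  have hwb : BddLoc (coneGT N ρ Ω) (wgt φ (g - (N - 2))) := wgt_bdd hphi _ hρ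
  rw [← ENNReal.ofReal_le_ofReal_iff (by positivity), Hm,
    ofReal_integral_eq_lintegral_ofReal (Hm_int hΩ hρ hwc hwb hm hmz t)]
  · set K := exp (g * (t + 1)) * exp (-(N * (t - 1))) with hK
    have hpt : ∀ x ∈ coneGT N ρ Ω, ENNReal.ofReal (wgt φ (g - (N - 2)) x * m (t - Real.log ‖x‖)) ≤
      (ann N t).indicator (fun _ => ENNReal.ofReal K) x := by
      intro x hx
      by_cases hxa : x ∈ ann N t
      · rw [indicator_of_mem hxa]
        refine ENNReal.ofReal_le_ofReal ?_
        have hW0 : 0 < wgt φ (g - (N - 2)) x := wgt_pos hphi hρ hx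
        refine (mul_le_of_le_one_right hW0.le (hm1 _)).trans ?_
        rw [wgt_eq (coneGT_sub hρ hx).1]
        have b1 := bigPhi_le hphi (coneGT_sub hρ hx)
        have b0 := bigPhi_pos hphi (coneGT_sub hρ hx)
        have b2 : exp (-(N * Real.log ‖x‖)) ≤ exp (-(N * (t - 1))) := by
          refine exp_le_exp.2 (neg_le_neg ?_)
          have := hxa.1
          gcongr
        have b3 : exp (g * Real.log ‖x‖) ≤ exp (g * (t + 1)) := by
          refine exp_le_exp.2 ?_
          have := hxa.2
          gcongr
        calc exp (g * Real.log ‖x‖) * exp (-(N * Real.log ‖x‖)) * bigPhi φ x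
            ≤ exp (g * (t + 1)) * exp (-(N * (t - 1))) * 1 := by gcongr
          _ = K := by rw [mul_one]
      · rw [indicator_of_notMem hxa, hmz, mul_zero, ENNReal.ofReal_zero]
        intro h
        exact hxa ⟨by linarith [h.2], by linarith [h.1]⟩
    refine (setLIntegral_mono' hU.measurableSet hpt).trans ?_
    rw [lintegral_indicator (measurableSet_ann t), Measure.restrict_restrict (measurableSet_ann t),
      lintegral_const, Measure.restrict_apply_univ]
    refine (mul_le_mul_right (ann_vol hρ t) _).trans ?_
    rw [← ENNReal.ofReal_mul (by positivity)]
    refine ENNReal.ofReal_le_ofReal (le_of_eq ?_)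
    have : exp (g * (t + 1)) * exp (-(N * (t - 1))) * exp (N * (t + 1)) = exp (g + 2 * N) * exp (g * t) := by
      rw [← exp_add, ← exp_add, ← exp_add]; ring_nf
    rw [hK, ← mul_assoc, this]; ring
  · filter_upwards [ae_restrict_mem hU.measurableSet] with x hx
    exact mul_nonneg (wgt_pos hphi hρ hx).le (hm0 _)

theorem tangent {z z0 q : ℝ} (hz : 0 < z) (hz0 : 0 < z0) (hq : 1 < q) :
    (1 - q) * z0 ^ q + q * z0 ^ (q - 1) * z ≤ z ^ q := by
  have h := one_add_mul_self_le_rpow_one_add (s := z / z0 - 1) (p := q)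
    (by have : 0 < z / z0 := by positivity
        linarith) hq.le
  rw [add_sub_cancel, div_rpow hz.le hz0.le, le_div_iff₀ (by positivity)] at h
  have e : z0 ^ q = z0 ^ (q - 1) * z0 := by rw [← rpow_add_one hz0.ne', sub_add_cancel]
  have : q * z0 ^ (q - 1) * z = q * (z / z0) * z0 ^ q := by rw [e]; field_simp
  linarith

theorem BddLoc.rpow {U : Set (Euc N)} {u : Euc N → ℝ} (hu : BddLoc U u) (hu0 : ∀ x ∈ U, 0 < u x)
    {q : ℝ} (hq : 0 ≤ q) : BddLoc U (fun x => u x ^ q) := by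
  intro R
  obtain ⟨C, h0, h⟩ := hu.nn R
  refine ⟨C ^ q, fun x hx hR => ?_⟩
  have h1 := hu0 x hx
  have h2 := h x hx hR
  rw [abs_of_pos h1] at h2
  rw [abs_of_pos (by positivity)]
  exact rpow_le_rpow h1.le h2 hq

theorem exp_log_bdd {ρ : ℝ} (hρ : 0 < ρ) (s : ℝ) :
    BddLoc (coneGT N ρ Ω) (fun x => exp (s * Real.log ‖x‖)) := by
  intro R
  refine ⟨exp (|s| * (|Real.log ρ| + |Real.log R|)), fun x hx hR => ?_⟩
  have hn : 0 < ‖x‖ := hρ.trans hx.1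
  rw [abs_of_pos (exp_pos _)]
  have h3 : |Real.log ‖x‖| ≤ |Real.log ρ| + |Real.log R| := by
    have a1 := Real.log_le_log hρ hx.1.le
    have a2 := Real.log_le_log hn hR
    have := neg_abs_le (Real.log ρ)
    have := le_abs_self (Real.log R)
    have := abs_nonneg (Real.log ρ)
    have := abs_nonneg (Real.log R)
    rw [abs_le]; constructor <;> linarith
  exact exp_le_exp.2 ((le_abs_self _).trans (by rw [abs_mul]; gcongr))

theorem stepC (hΩ : IsConeDomain N Ω) (hphi : DirichletEigenpair N Ω lam1 φ)
    {ρ g μ q σ c : ℝ} (hρ : 0 < ρ) (hg : 0 < g) (hgk : g * (g - (N - 2)) = lam1 - μ)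
    (hD : 0 ≤ 2 * g - (N - 2)) (hq : 1 < q) (hc : 0 < c) {u : Euc N → ℝ}
    (hu : ContDiffOn ℝ 2 u (coneGT N ρ Ω)) (hu0 : ∀ x ∈ coneGT N ρ Ω, 0 < u x)
    (hub : BddLoc (coneGT N ρ Ω) u)
    (hineq : ∀ x ∈ coneGT N ρ Ω, c * exp (-σ * Real.log ‖x‖) * u x ^ q ≤
      -lap N u x - μ / ‖x‖ ^ 2 * u x) (hE : 0 ≤ 2 - σ - (q - 1) * g) : False := by
  have hU := isOpen_coneGT hρ hΩ
  have hne : ∀ x ∈ coneGT N ρ Ω, x ≠ 0 := fun x hx => (coneGT_sub hρ hx).1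
  have hn : ∀ x ∈ coneGT N ρ Ω, 0 < ‖x‖ := fun x hx => hρ.trans hx.1
  obtain ⟨m, hm, hm0, hm1, hmz, hm00⟩ := exists_bump
  have hk : (g - (N - 2)) * ((g - (N - 2)) + (N - 2)) = lam1 - μ := by rw [← hgk]; ring
  have hqc : ContinuousOn (fun x => u x ^ q) (coneGT N ρ Ω) :=
    hu.continuousOn.rpow_const fun x hx => Or.inl (hu0 x hx).ne'
  have hqb : BddLoc (coneGT N ρ Ω) (fun x => u x ^ q) := hub.rpow hu0 (by linarith)
  have hecont : ∀ s : ℝ, ContinuousOn (fun x : Euc N => exp (s * Real.log ‖x‖)) (coneGT N ρ Ω) :=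
    fun s => (continuousOn_const.mul (logn_continuousOn hρ)).rexp
  have hcb : BddLoc (coneGT N ρ Ω) (fun _ => c) := fun R => ⟨|c|, fun _ _ _ => le_rfl⟩
  set f : Euc N → ℝ := fun x => c * exp (-σ * Real.log ‖x‖) * u x ^ q with hf
  have hfc : ContinuousOn f (coneGT N ρ Ω) := (continuousOn_const.mul (hecont _)).mul hqc
  have hfb : BddLoc (coneGT N ρ Ω) f := (hcb.mul (exp_log_bdd hρ _)).mul hqb
  obtain ⟨H1, H2, hH1, hH2, hode⟩ := Hm_ode hΩ hphi hρ hk hu (fun x hx => (hu0 x hx).le) hub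
    hfb hfc hineq hm hm0 hmz
  set w := wgt φ (g - (N - 2)) with hw
  have hwc : ContinuousOn w (coneGT N ρ Ω) := wgt_continuousOn hΩ hphi hρ
  have hwb : BddLoc (coneGT N ρ Ω) w := wgt_bdd hphi _ hρ
  have hwp : ∀ x ∈ coneGT N ρ Ω, 0 < w x := fun x hx => wgt_pos hphi hρ hx
  set W : Euc N → ℝ := fun x => u x * w x with hW
  have hWc : ContinuousOn W (coneGT N ρ Ω) := hu.continuousOn.mul hwc
  have hWb : BddLoc (coneGT N ρ Ω) W := hub.mul hwb
  have hWp : ∀ x ∈ coneGT N ρ Ω, 0 < W x := fun x hx => mul_pos (hu0 x hx) (hwp x hx)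
  set H := Hm (coneGT N ρ Ω) W m with hH
  set t0 := max (Real.log ρ + 1) 0 with ht0
  have hHp : ∀ t, t0 < t → 0 < H t := fun t ht =>
    Hm_pos hΩ hρ hWc hWb hWp hm.continuous hm0 hmz hm00 (by linarith [le_max_left (Real.log ρ + 1) 0])
  obtain ⟨C, hC0, hC⟩ := wgt_mass hΩ hphi hρ hg hm.continuous hm0 hm1 hmz
  set Wq : Euc N → ℝ := fun x => u x ^ q * w x with hWq
  have hWqc : ContinuousOn Wq (coneGT N ρ Ω) := hqc.mul hwc
  have hWqb : BddLoc (coneGT N ρ Ω) Wq := hqb.mul hwb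
  have jensen : ∀ t, t0 < t → C * exp (g * t) * (H t / (C * exp (g * t))) ^ q ≤
      Hm (coneGT N ρ Ω) Wq m t := by
    intro t ht
    set M := C * exp (g * t) with hM
    have hM0 : 0 < M := by positivity
    set z := H t / M with hz
    have hz0 : 0 < z := div_pos (hHp t ht) hM0
    have i1 := Hm_int hΩ hρ hwc hwb hm.continuous hmz t
    have i2 := Hm_int hΩ hρ hWc hWb hm.continuous hmz t
    have i3 := Hm_int hΩ hρ hWqc hWqb hm.continuous hmz t
    have h1 : (1 - q) * z ^ q * Hm (coneGT N ρ Ω) w m t + q * z ^ (q - 1) * H t ≤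
        Hm (coneGT N ρ Ω) Wq m t := by
      rw [hH]
      unfold Hm
      rw [← integral_const_mul, ← integral_const_mul, ← integral_add (i1.const_mul _) (i2.const_mul _)]
      refine setIntegral_mono_on ((i1.const_mul _).add (i2.const_mul _)) i3 hU.measurableSet fun x hx => ?_
      have h := mul_le_mul_of_nonneg_right (tangent (hu0 x hx) hz0 hq)
        (mul_nonneg (hwp x hx).le (hm0 (t - Real.log ‖x‖)))
      simp only [hW, hWq]
      linarith
    refine le_trans ?_ h1
    have h2 : Hm (coneGT N ρ Ω) w m t ≤ M := hC t
    have h3 : H t = z * M := by rw [hz]; field_simp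
    have e : z ^ q = z ^ (q - 1) * z := by rw [← rpow_add_one hz0.ne', sub_add_cancel]
    have hzq : 0 < z ^ q := by positivity
    have h4 : q * z ^ (q - 1) * H t = q * z ^ q * M := by rw [h3, e]; ring
    rw [h4]
    nlinarith [mul_le_mul_of_nonneg_left h2 (mul_nonneg (sub_nonneg.2 hq.le) hzq.le)]
  set c' := c * exp (-|2 - σ|) * C ^ (1 - q) with hc'
  refine ode_blowup (c := c') (q := q) (t0 := t0) (D := 2 * (g - (N - 2)) + (N - 2)) hH1 hH2 (by linarith)
    (by positivity) hq hHp fun t ht => ?_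
  have ho := hode t (lt_of_le_of_lt (le_max_left _ _) ht)
  refine ho.trans (sub_le_sub_left ?_ _)
  have ht' : 0 < t := lt_of_le_of_lt (le_max_right _ _) ht
  have i3 := Hm_int hΩ hρ hWqc hWqb hm.continuous hmz t
  have hrc : ContinuousOn (fun x : Euc N => ‖x‖ ^ 2 * w x) (coneGT N ρ Ω) :=
    ContinuousOn.mul (by fun_prop) hwc
  have hrb : BddLoc (coneGT N ρ Ω) (fun x : Euc N => ‖x‖ ^ 2 * w x) := by
    refine BddLoc.mul (fun R => ⟨R ^ 2, fun x hx hR => ?_⟩) hwb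
    rw [abs_of_nonneg (by positivity)]; gcongr
  have i4 := Hm_int hΩ hρ (hfc.mul hrc) (hfb.mul hrb) hm.continuous hmz t
  have h5 : c * exp (-|2 - σ|) * exp ((2 - σ) * t) * Hm (coneGT N ρ Ω) Wq m t ≤
      Hm (coneGT N ρ Ω) (fun x => f x * (‖x‖ ^ 2 * w x)) m t := by
    unfold Hm
    rw [← integral_const_mul]
    refine setIntegral_mono_on (i3.const_mul _) i4 hU.measurableSet fun x hx => ?_
    have e2 : ‖x‖ ^ 2 = exp (2 * Real.log ‖x‖) := by
      rw [show 2 * Real.log ‖x‖ = (((2 : ℕ) : ℝ) * Real.log ‖x‖) by push_cast; ring, exp_nat_mul,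
        exp_log (hn x hx)]
    by_cases hs : t - Real.log ‖x‖ ∈ Icc (-1 : ℝ) 1
    · simp only [hWq, hf, e2]
      have h6 : exp (-|2 - σ|) * exp ((2 - σ) * t) ≤ exp (-σ * Real.log ‖x‖) * exp (2 * Real.log ‖x‖) := by
        rw [← exp_add, ← exp_add]
        refine exp_le_exp.2 ?_
        have h7 : (2 - σ) * (t - Real.log ‖x‖) ≤ |2 - σ| := by
          refine (le_abs_self _).trans ?_
          rw [abs_mul]
          exact mul_le_of_le_one_right (abs_nonneg _) (abs_le.2 hs)
        linarith
      have h8 : 0 ≤ c * (u x ^ q * w x * m (t - Real.log ‖x‖)) :=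
        mul_nonneg hc.le (mul_nonneg (mul_nonneg (rpow_nonneg (hu0 x hx).le _) (hwp x hx).le) (hm0 _))
      have := mul_le_mul_of_nonneg_right h6 h8
      linarith
    · simp [hmz _ hs]
  refine le_trans ?_ h5
  have h9 := mul_le_mul_of_nonneg_left (jensen t ht)
    (show 0 ≤ c * exp (-|2 - σ|) * exp ((2 - σ) * t) by positivity)
  refine le_trans ?_ h9
  have hHt := hHp t ht
  have e1 : C * exp (g * t) * (H t / (C * exp (g * t))) ^ q =
      C ^ (1 - q) * H t ^ q * exp (-((q - 1) * g * t)) := by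
    rw [div_rpow hHt.le (by positivity), mul_rpow hC0.le (exp_pos _).le, ← exp_mul, rpow_sub hC0, rpow_one]
    have : exp (-((q - 1) * g * t)) = exp (g * t) / exp (g * t * q) := by rw [← exp_sub]; ring_nf
    rw [this]
    have := rpow_pos_of_pos hC0 q
    field_simp
  rw [e1]
  have e3 : c * exp (-|2 - σ|) * exp ((2 - σ) * t) * (C ^ (1 - q) * H t ^ q * exp (-((q - 1) * g * t))) =
    c' * H t ^ q * exp ((2 - σ - (q - 1) * g) * t) := by
    rw [show (2 - σ - (q - 1) * g) * t = (2 - σ) * t + (-((q - 1) * g * t)) by ring, exp_add, hc']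
    ring
  rw [e3]
  have : 1 ≤ exp ((2 - σ - (q - 1) * g) * t) := one_le_exp (by positivity)
  exact le_mul_of_one_le_right (by positivity) this

end
end

open MeasureTheory Real Set
open scoped ENNReal NNReal
noncomputable section

section
variable {N : ℕ} {Ω : Set (Euc N)} {lam1 : ℝ} {φ : Euc N → ℝ}

theorem convLow {ρ α c s t p : ℝ} (hΩ : IsConeDomain N Ω) (hρ : 0 < ρ) (hα : 0 ≤ α) (hc : 0 < c)
    {u : Euc N → ℝ} (hu0 : ∀ x ∈ coneGT N ρ Ω, 0 < u x)
    (h : ENNReal.ofReal (c * exp (s * t)) ≤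
      ∫⁻ x in ann N t ∩ coneGT N ρ Ω, ENNReal.ofReal (u x ^ p))
    {x : Euc N} (hx : x ≠ 0) (hxt : Real.log ‖x‖ < t - 1) :
    ENNReal.ofReal (c * 2 ^ (-α) * exp (-α) * exp ((s - α) * t)) ≤
      ∫⁻ y in ann N t ∩ coneGT N ρ Ω, ENNReal.ofReal (u y ^ p * ‖x - y‖ ^ (-α)) := by
  have hn : 0 < ‖x‖ := by simpa using hx
  have hU := isOpen_coneGT hρ hΩ
  set κ : ℝ := (2 * exp (t + 1)) ^ (-α) with hκ
  have hκ0 : 0 < κ := by positivity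
  have e1 : c * 2 ^ (-α) * exp (-α) * exp ((s - α) * t) = κ * (c * exp (s * t)) := by
    rw [hκ, mul_rpow (by norm_num) (exp_pos _).le, ← exp_mul]
    have : exp (-α) * exp ((s - α) * t) = exp ((t + 1) * -α) * exp (s * t) := by
      rw [← exp_add, ← exp_add]; ring_nf
    calc _ = c * 2 ^ (-α) * (exp (-α) * exp ((s - α) * t)) := by ring
      _ = _ := by rw [this]; ring
  rw [e1, ENNReal.ofReal_mul hκ0.le]
  calc ENNReal.ofReal κ * ENNReal.ofReal (c * exp (s * t))
      ≤ ENNReal.ofReal κ * ∫⁻ x in ann N t ∩ coneGT N ρ Ω, ENNReal.ofReal (u x ^ p) := by gcongr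
    _ = ∫⁻ x in ann N t ∩ coneGT N ρ Ω, ENNReal.ofReal κ * ENNReal.ofReal (u x ^ p) :=
        (lintegral_const_mul' _ _ ENNReal.ofReal_ne_top).symm
    _ ≤ _ := by
      refine setLIntegral_mono' ((measurableSet_ann t).inter hU.measurableSet) fun y hy => ?_
      rw [← ENNReal.ofReal_mul hκ0.le]
      refine ENNReal.ofReal_le_ofReal ?_
      rw [mul_comm]
      have hyn : 0 < ‖y‖ := hρ.trans hy.2.1
      have hy1 : ‖y‖ ≤ exp (t + 1) := by rw [← exp_log hyn]; exact exp_le_exp.2 hy.1.2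
      have hx1 : ‖x‖ < exp (t - 1) := by rw [← exp_log hn]; exact exp_lt_exp.2 hxt
      have hy2 : exp (t - 1) ≤ ‖y‖ := by rw [← exp_log hyn]; exact exp_le_exp.2 hy.1.1
      have hx2 : exp (t - 1) ≤ exp (t + 1) := exp_le_exp.2 (by linarith)
      have h1 : 0 < ‖x - y‖ := by
        rw [norm_pos_iff, sub_ne_zero]; rintro rfl; linarith
      have h2 : ‖x - y‖ ≤ 2 * exp (t + 1) := (norm_sub_le _ _).trans (by linarith)
      have h3 : κ ≤ ‖x - y‖ ^ (-α) := rpow_le_rpow_of_nonpos h1 h2 (by linarith)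
      have := rpow_nonneg (hu0 y hy.2).le p
      gcongr

theorem stepB {ρ α c s t1 p : ℝ} (hΩ : IsConeDomain N Ω) (hρ : 0 < ρ) (hα : 0 ≤ α) (hc : 0 < c)
    {u : Euc N → ℝ} (hu0 : ∀ x ∈ coneGT N ρ Ω, 0 < u x)
    (h : ∀ t, t1 ≤ t → ENNReal.ofReal (c * exp (s * t)) ≤
      ∫⁻ x in ann N t ∩ coneGT N ρ Ω, ENNReal.ofReal (u x ^ p))
    {x : Euc N} (hx : x ≠ 0) (hfin : rieszConv N α ρ Ω (fun y => u y ^ p) x < ⊤) : s < α := by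
  by_contra hs
  push Not at hs
  have hU := isOpen_coneGT hρ hΩ
  set T := max t1 (Real.log ‖x‖ + 2) with hT
  set A : ℕ → Set (Euc N) := fun j => ann N (T + 3 * j) ∩ coneGT N ρ Ω with hA
  have hdis : Pairwise (Function.onFun Disjoint A) := by
    intro i j hij
    refine Set.disjoint_left.2 fun y hy hy' => hij ?_
    have h1 := hy.1.1
    have h2 := hy.1.2
    have h3 := hy'.1.1
    have h4 := hy'.1.2
    have a : (i : ℝ) < j + 1 := by linarith
    have b : (j : ℝ) < i + 1 := by linarith
    have a' : i < j + 1 := by exact_mod_cast a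
    have b' : j < i + 1 := by exact_mod_cast b
    omega
  have h1 : ∫⁻ y in ⋃ j, A j, ENNReal.ofReal (u y ^ p * ‖x - y‖ ^ (-α)) ≤
      rieszConv N α ρ Ω (fun y => u y ^ p) x :=
    lintegral_mono_set (iUnion_subset fun j => inter_subset_right)
  rw [lintegral_iUnion (fun j => (measurableSet_ann _).inter hU.measurableSet) hdis] at h1
  have h2 : ∑' _ : ℕ, ENNReal.ofReal (c * 2 ^ (-α) * exp (-α) * exp ((s - α) * T)) ≤
      ∑' j, ∫⁻ y in A j, ENNReal.ofReal (u y ^ p * ‖x - y‖ ^ (-α)) := by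
    refine ENNReal.tsum_le_tsum fun j => ?_
    have hj : (0 : ℝ) ≤ 3 * j := by positivity
    refine le_trans ?_ (convLow hΩ hρ hα hc hu0 (h (T + 3 * j) ?_) hx ?_)
    · refine ENNReal.ofReal_le_ofReal ?_
      have : exp ((s - α) * T) ≤ exp ((s - α) * (T + 3 * j)) := by
        refine exp_le_exp.2 ?_
        have : 0 ≤ s - α := by linarith
        nlinarith
      gcongr
    · linarith [le_max_left t1 (Real.log ‖x‖ + 2)]
    · linarith [le_max_right t1 (Real.log ‖x‖ + 2)]
  rw [ENNReal.tsum_const_eq_top_of_ne_zero (by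
    rw [Ne, ENNReal.ofReal_eq_zero, not_le]; positivity)] at h2
  exact (lt_of_le_of_lt (h2.trans h1) hfin).ne rfl

theorem bddLoc_of_closure {U : Set (Euc N)} {u : Euc N → ℝ} (h : ContinuousOn u (closure U)) :
    BddLoc U u := by
  intro R
  have hK : IsCompact (closure U ∩ Metric.closedBall 0 R) :=
    (isCompact_closedBall (0 : Euc N) R).inter_left isClosed_closure
  obtain ⟨C, hC⟩ := hK.exists_bound_of_continuousOn (h.mono inter_subset_left)
  exact ⟨C, fun x hx hR => hC x ⟨subset_closure hx, by simpa using hR⟩⟩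

theorem BddLoc.mono {U U' : Set (Euc N)} {u : Euc N → ℝ} (h : BddLoc U u) (hs : U' ⊆ U) :
    BddLoc U' u := fun R => by
  obtain ⟨C, hC⟩ := h R
  exact ⟨C, fun x hx => hC x (hs hx)⟩

theorem hardy_conv {x : Euc N} {μ a : ℝ} : μ * ‖x‖ ^ (-(2:ℝ)) * a = μ / ‖x‖ ^ 2 * a := by
  rw [rpow_neg (norm_nonneg _), rpow_two]; rfl

theorem exists_mem_coneGT (hΩ : IsConeDomain N Ω) {ρ : ℝ} (hρ : 0 < ρ) : ∃ x, x ∈ coneGT N ρ Ω := by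
  obtain ⟨ω, hω⟩ := hΩ.2.1.nonempty
  have h1 : ‖ω‖ = 1 := by simpa using hΩ.1 hω
  have hn : ‖(ρ + 1) • ω‖ = ρ + 1 := by rw [norm_smul, h1, mul_one, Real.norm_of_nonneg (by linarith)]
  refine ⟨(ρ + 1) • ω, ?_, ?_⟩
  · rw [hn]; linarith
  · rw [hn, smul_smul, inv_mul_cancel₀ (by linarith), one_smul]; exact hω

theorem necessity (hΩ : IsConeDomain N Ω) (hphi : DirichletEigenpair N Ω lam1 φ)
    {ρ g μ α p q : ℝ} (hρ : 0 < ρ) (hα : 0 ≤ α) (hg : 0 < g) (hgk : g * (g - (N - 2)) = lam1 - μ)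
    (hD : 0 ≤ 2 * g - (N - 2)) (hp : 0 < p) (hq : 1 < q) {u : Euc N → ℝ}
    (hu : IsPosSolE N ρ μ α p q Ω u) : N - α < p * g ∧ N - α + 2 < (p + q - 1) * g := by
  obtain ⟨hu2, huc, hu0, hfin, hin⟩ := hu
  simp only [hardy_conv] at hin
  obtain ⟨c, t1, hc, hA⟩ := stepA hΩ hphi hρ hg hgk hD hp hu2 hu0 fun x hx =>
    le_trans (mul_nonneg ENNReal.toReal_nonneg (rpow_nonneg (hu0 x hx).le _)) (hin x hx)
  obtain ⟨x0, hx0⟩ := exists_mem_coneGT hΩ hρ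
  have hB := stepB hΩ hρ hα hc hu0 hA (coneGT_sub hρ hx0).1 (hfin x0 hx0)
  refine ⟨by linarith, ?_⟩
  by_contra hcon
  push Not at hcon
  set ρ2 := max ρ (exp t1) with hρ2
  have hρ2p : 0 < ρ2 := hρ.trans_le (le_max_left _ _)
  have hsub : coneGT N ρ2 Ω ⊆ coneGT N ρ Ω := coneGT_mono (le_max_left _ _)
  set σ := p * g - N + α with hσ
  set c' := c * 2 ^ (-α) * exp (-α) * exp (-(2 * σ)) with hc'
  have hc'0 : 0 < c' := by positivity
  refine stepC (c := c') (q := q) (σ := σ) hΩ hphi hρ2p hg hgk hD hq hc'0 (hu2.mono hsub)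
    (fun x hx => hu0 x (hsub hx)) ((bddLoc_of_closure huc).mono hsub) (fun x hx => ?_) (by linarith)
  refine le_trans ?_ (hin x (hsub hx))
  have hux := hu0 x (hsub hx)
  refine mul_le_mul_of_nonneg_right ?_ (rpow_nonneg hux.le _)
  have hn : 0 < ‖x‖ := hρ2p.trans hx.1
  have hlog : t1 < Real.log ‖x‖ := by
    rw [Real.lt_log_iff_exp_lt hn]; exact lt_of_le_of_lt (le_max_right _ _) hx.1
  rw [← ENNReal.ofReal_le_iff_le_toReal (hfin x (hsub hx)).ne]
  have hl := convLow (α := α) hΩ hρ hα hc hu0 (hA (Real.log ‖x‖ + 2) (by linarith))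
    (x := x) (by simpa using hn) (by linarith)
  refine le_trans (le_trans (le_of_eq ?_) hl) (lintegral_mono_set inter_subset_right)
  congr 1
  have : exp ((N - p * g - α) * (Real.log ‖x‖ + 2)) = exp (-(2 * σ)) * exp (-σ * Real.log ‖x‖) := by
    rw [← exp_add, hσ]; ring_nf
  rw [this, hc']; ring

end
end

open MeasureTheory Real Set
open scoped ENNReal NNReal
noncomputable section
section
variable {N : ℕ} {Ω : Set (Euc N)} {lam1 : ℝ} {φ : Euc N → ℝ}

theorem near_fin (hN : 2 ≤ N) {s : ℝ} (hs : s < N) :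
    ∫⁻ y : Euc N in Metric.ball 0 (1/2), ENNReal.ofReal (‖y‖ ^ (-s)) < ⊤ := by
  have : Nontrivial (Fin N) := Fin.nontrivial_iff_two_le.2 hN
  have h : IntegrableOn (fun y : Euc N => (fun r : ℝ => r ^ (-s)) ‖y‖) (Metric.ball 0 (1/2)) := by
    refine (integrableOn_fun_norm_addHaar (f := fun r : ℝ => r ^ (-s)) (μ := volume)).2 ?_
    have h2 : IntegrableOn (fun y : ℝ => y ^ ((N:ℝ) - 1 - s)) (Ioo 0 (1/2)) :=
      (intervalIntegral.integrableOn_Ioo_rpow_iff (by norm_num)).2 (by linarith)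
    refine h2.congr_fun ?_ measurableSet_Ioo
    intro y hy
    have hy0 : 0 < y := hy.1
    simp only [finrank_euclideanSpace, Fintype.card_fin, smul_eq_mul]
    rw [← Real.rpow_natCast, ← Real.rpow_add hy0]
    congr 1
    rw [Nat.cast_sub (by omega)]; push_cast; ring
  have := h.lintegral_lt_top
  simpa using this

theorem ptwise {s α : ℝ} (hs : 0 ≤ s) (hα : 0 ≤ α) {x : Euc N} (hx : ‖x‖ = 1) (y : Euc N) :
    ENNReal.ofReal (‖y‖ ^ (-s) * ‖x - y‖ ^ (-α)) ≤
      ENNReal.ofReal (2 ^ α) * (Metric.ball (0 : Euc N) (1/2)).indicator (fun y => ENNReal.ofReal (‖y‖ ^ (-s))) y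
      + ENNReal.ofReal (2 ^ s) * (Metric.ball (0 : Euc N) (1/2)).indicator (fun y => ENNReal.ofReal (‖y‖ ^ (-α))) (x - y)
      + ENNReal.ofReal (3 ^ s * 5 ^ α) * ENNReal.ofReal ((1 + ‖y‖) ^ (-(s+α))) := by
  have tri : ‖x‖ ≤ ‖y‖ + ‖x - y‖ := by
    have := norm_add_le y (x - y); simpa using this
  have tri2 : ‖y‖ ≤ ‖x‖ + ‖x - y‖ := by
    have := norm_sub_le x (x - y); simpa using this
  have half : ∀ {t a : ℝ}, 0 ≤ a → 1/2 ≤ t → t ^ (-a) ≤ 2 ^ a := by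
    intro t a ha ht
    have := Real.rpow_le_rpow_of_nonpos (z := -a) (by norm_num) ht (by linarith)
    refine this.trans (le_of_eq ?_)
    rw [Real.rpow_neg (by norm_num), ← Real.inv_rpow (by norm_num)]; norm_num
  by_cases h1 : ‖y‖ < 1/2
  · rw [indicator_of_mem (by simpa using h1) (s := Metric.ball (0 : Euc N) (1/2)) (a := y)]
    refine le_trans ?_ (le_trans le_self_add le_self_add)
    rw [← ENNReal.ofReal_mul (by positivity), mul_comm]
    refine ENNReal.ofReal_le_ofReal ?_
    gcongr
    exact half hα (by linarith)
  by_cases h2 : ‖x - y‖ < 1/2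
  · rw [indicator_of_mem (by simpa using h2) (s := Metric.ball (0 : Euc N) (1/2)) (a := x - y)]
    refine le_trans ?_ (le_trans le_add_self le_self_add)
    rw [← ENNReal.ofReal_mul (by positivity)]
    refine ENNReal.ofReal_le_ofReal ?_
    gcongr
    exact half hs (by linarith)
  push Not at h1 h2
  refine le_trans ?_ le_add_self
  rw [← ENNReal.ofReal_mul (by positivity)]
  refine ENNReal.ofReal_le_ofReal ?_
  have hy : 0 < 1 + ‖y‖ := by positivity
  have a1 : ‖y‖ ^ (-s) ≤ 3 ^ s * (1 + ‖y‖) ^ (-s) := by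
    have := Real.rpow_le_rpow_of_nonpos (x := (1 + ‖y‖)/3) (y := ‖y‖) (z := -s) (by positivity) (by linarith) (by linarith)
    refine this.trans (le_of_eq ?_)
    rw [Real.div_rpow hy.le (by norm_num), Real.rpow_neg (by norm_num : (0:ℝ) ≤ 3)]
    field_simp
  have a2 : ‖x - y‖ ^ (-α) ≤ 5 ^ α * (1 + ‖y‖) ^ (-α) := by
    have := Real.rpow_le_rpow_of_nonpos (x := (1 + ‖y‖)/5) (y := ‖x - y‖) (z := -α) (by positivity) (by linarith) (by linarith)
    refine this.trans (le_of_eq ?_)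
    rw [Real.div_rpow hy.le (by norm_num), Real.rpow_neg (by norm_num : (0:ℝ) ≤ 5)]
    field_simp
  calc _ ≤ (3 ^ s * (1 + ‖y‖) ^ (-s)) * (5 ^ α * (1 + ‖y‖) ^ (-α)) := by gcongr
    _ = _ := by
      rw [show -(s+α) = -s + -α by ring, Real.rpow_add hy]; ring

theorem riesz_unit (hN : 2 ≤ N) {s α : ℝ} (hs : 0 ≤ s) (hα : 0 ≤ α) (hs2 : s < N) (hα2 : α < N)
    (hsα : N < s + α) : ∃ C : ℝ, 0 ≤ C ∧ ∀ x : Euc N, ‖x‖ = 1 →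
      ∫⁻ y : Euc N, ENNReal.ofReal (‖y‖ ^ (-s) * ‖x - y‖ ^ (-α)) ≤ ENNReal.ofReal C := by
  have f1 := near_fin hN hs2
  have f2 := near_fin hN hα2
  have f3 : ∫⁻ y : Euc N, ENNReal.ofReal ((1 + ‖y‖) ^ (-(s+α))) < ⊤ :=
    finite_integral_one_add_norm (by simpa using hsα)
  rw [← lintegral_indicator Metric.isOpen_ball.measurableSet] at f1 f2
  set K : ℝ≥0∞ := ENNReal.ofReal (2 ^ α) * (∫⁻ y, (Metric.ball (0 : Euc N) (1/2)).indicator (fun y => ENNReal.ofReal (‖y‖ ^ (-s))) y)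
      + ENNReal.ofReal (2 ^ s) * (∫⁻ y, (Metric.ball (0 : Euc N) (1/2)).indicator (fun y => ENNReal.ofReal (‖y‖ ^ (-α))) y)
      + ENNReal.ofReal (3 ^ s * 5 ^ α) * ∫⁻ y : Euc N, ENNReal.ofReal ((1 + ‖y‖) ^ (-(s+α))) with hK
  have hKt : K < ⊤ := by
    refine ENNReal.add_lt_top.2 ⟨ENNReal.add_lt_top.2 ⟨?_, ?_⟩, ?_⟩ <;>
    exact ENNReal.mul_lt_top ENNReal.ofReal_lt_top (by assumption)
  refine ⟨K.toReal, ENNReal.toReal_nonneg, fun x hx => ?_⟩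
  rw [ENNReal.ofReal_toReal hKt.ne]
  refine (lintegral_mono (ptwise hs hα hx)).trans ?_
  have m1 : ∀ a : ℝ, Measurable ((Metric.ball (0 : Euc N) (1/2)).indicator (fun y => ENNReal.ofReal (‖y‖ ^ (-a)))) := by
    intro a
    refine Measurable.indicator (by fun_prop) Metric.isOpen_ball.measurableSet
  have m2 : Measurable fun y : Euc N => (Metric.ball (0 : Euc N) (1/2)).indicator (fun y => ENNReal.ofReal (‖y‖ ^ (-α))) (x - y) :=
    (m1 α).comp (by fun_prop)
  rw [lintegral_add_right _ (by fun_prop), lintegral_add_right _ (m2.const_mul _),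
    lintegral_const_mul _ (m1 s), lintegral_const_mul _ m2, lintegral_const_mul _ (by fun_prop),
    lintegral_sub_left_eq_self (μ := volume) ((Metric.ball (0 : Euc N) (1/2)).indicator (fun y => ENNReal.ofReal (‖y‖ ^ (-α)))) x]

theorem riesz (hN : 2 ≤ N) {s α : ℝ} (hs : 0 ≤ s) (hα : 0 ≤ α) (hs2 : s < N) (hα2 : α < N)
    (hsα : N < s + α) : ∃ C : ℝ, 0 ≤ C ∧ ∀ x : Euc N, x ≠ 0 →
      ∫⁻ y : Euc N, ENNReal.ofReal (‖y‖ ^ (-s) * ‖x - y‖ ^ (-α)) ≤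
        ENNReal.ofReal (C * ‖x‖ ^ (N - s - α)) := by
  obtain ⟨C, hC, h⟩ := riesz_unit hN hs hα hs2 hα2 hsα
  refine ⟨C, hC, fun x hx => ?_⟩
  set r := ‖x‖ with hr
  have hr0 : 0 < r := norm_pos_iff.2 hx
  set F : Euc N → ℝ≥0∞ := fun y => ENNReal.ofReal (‖y‖ ^ (-s) * ‖x - y‖ ^ (-α)) with hF
  have hFm : Measurable F := by fun_prop
  have key : ∫⁻ y, F (r • y) = ENNReal.ofReal (r ^ N)⁻¹ * ∫⁻ y, F y := by
    have := lintegral_map (μ := (volume : Measure (Euc N))) hFm (measurable_const_smul r)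
    rw [← this, Measure.map_addHaar_smul _ hr0.ne', lintegral_smul_measure]
    simp only [finrank_euclideanSpace, Fintype.card_fin, smul_eq_mul]
    rw [abs_of_nonneg (by positivity)]
  have hu := h (r⁻¹ • x) (by rw [norm_smul, norm_inv, norm_norm, ← hr, inv_mul_cancel₀ hr0.ne'])
  have e : ∀ y, F (r • y) = ENNReal.ofReal (r ^ (-s - α)) *
      ENNReal.ofReal (‖y‖ ^ (-s) * ‖r⁻¹ • x - y‖ ^ (-α)) := by
    intro y
    rw [← ENNReal.ofReal_mul (by positivity)]
    simp only [hF]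
    congr 1
    have : x - r • y = r • (r⁻¹ • x - y) := by
      rw [smul_sub, smul_smul, mul_inv_cancel₀ hr0.ne', one_smul]
    rw [this, norm_smul, norm_smul, Real.norm_of_nonneg hr0.le, Real.mul_rpow hr0.le (norm_nonneg _),
      Real.mul_rpow hr0.le (norm_nonneg _), show -s - α = -s + -α by ring, Real.rpow_add hr0]
    ring
  simp_rw [e] at key
  rw [lintegral_const_mul _ (by fun_prop)] at key
  have k2 : ∫⁻ y, F y = ENNReal.ofReal (r ^ N) * (ENNReal.ofReal (r ^ (-s - α)) *
      ∫⁻ y, ENNReal.ofReal (‖y‖ ^ (-s) * ‖r⁻¹ • x - y‖ ^ (-α))) := by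
    rw [key, ← mul_assoc, ← ENNReal.ofReal_mul (by positivity), mul_inv_cancel₀ (by positivity)]
    simp
  rw [k2]
  calc _ ≤ ENNReal.ofReal (r ^ N) * (ENNReal.ofReal (r ^ (-s - α)) * ENNReal.ofReal C) := by gcongr
    _ = _ := by
      rw [← ENNReal.ofReal_mul (by positivity), ← ENNReal.ofReal_mul (by positivity)]
      congr 1
      rw [← Real.rpow_natCast, ← mul_assoc, ← Real.rpow_add hr0, mul_comm]
      congr 2; ring

/-- decay of the convolution with a power -/
theorem convUp (hN : 2 ≤ N) {ρ α b q' : ℝ} (hρ : 0 < ρ) (hα : 0 ≤ α) (hα2 : α < N) (hb : N - α < b)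
    (hq1 : max 0 (2 - α) < q') (hq2 : N - α + 2 < b + q') :
    ∃ β : ℝ, 2 < β + q' ∧ ∃ C : ℝ, 0 ≤ C ∧ ∀ x : Euc N, ρ < ‖x‖ →
      ∫⁻ y : Euc N in {y | ρ < ‖y‖}, ENNReal.ofReal (‖y‖ ^ (-b) * ‖x - y‖ ^ (-α)) ≤
        ENNReal.ofReal (C * ‖x‖ ^ (-β)) := by
  have hS : MeasurableSet {y : Euc N | ρ < ‖y‖} :=
    (isOpen_lt continuous_const continuous_norm).measurableSet
  rcases hα.eq_or_lt with rfl | hα0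
  · have hq3 := lt_of_le_of_lt (le_max_right _ _) hq1
    refine ⟨0, by linarith, ?_⟩
    have f3 : ∫⁻ y : Euc N, ENNReal.ofReal ((1 + ‖y‖) ^ (-b)) < ⊤ :=
      finite_integral_one_add_norm (by simpa using hb)
    have hN0 : (0:ℝ) ≤ N := by positivity
    refine ⟨(ENNReal.ofReal ((ρ/(1+ρ)) ^ (-b)) * ∫⁻ y : Euc N, ENNReal.ofReal ((1 + ‖y‖) ^ (-b))).toReal,
      ENNReal.toReal_nonneg, fun x _ => ?_⟩
    simp only [neg_zero, Real.rpow_zero, mul_one]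
    rw [ENNReal.ofReal_toReal (ENNReal.mul_lt_top ENNReal.ofReal_lt_top f3).ne,
      ← lintegral_const_mul _ (by fun_prop)]
    refine (setLIntegral_mono (by fun_prop) ?_).trans (setLIntegral_le_lintegral _ _)
    intro y hy
    have hy : ρ < ‖y‖ := hy
    rw [← ENNReal.ofReal_mul (by positivity), ← Real.mul_rpow (by positivity) (by positivity)]
    refine ENNReal.ofReal_le_ofReal (Real.rpow_le_rpow_of_nonpos (by positivity) ?_ (by linarith))
    rw [div_mul_eq_mul_div, div_le_iff₀ (by positivity)]
    nlinarith
  · obtain ⟨β, hβ1, hβ2⟩ : ∃ β, max 0 (2 - q') < β ∧ β < min α (b - (N - α)) := by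
      have h1 := lt_of_le_of_lt (le_max_right _ _) hq1
      have h2 := lt_of_le_of_lt (le_max_left _ _) hq1
      apply exists_between
      refine max_lt (lt_min hα0 (by linarith)) (lt_min (by linarith) (by linarith))
    have b1 := lt_of_le_of_lt (le_max_left _ _) hβ1
    have b2 := lt_of_le_of_lt (le_max_right _ _) hβ1
    have b3 := lt_of_lt_of_le hβ2 (min_le_left _ _)
    have b4 := lt_of_lt_of_le hβ2 (min_le_right _ _)
    obtain ⟨C, hC, h⟩ := riesz hN (s := N - α + β) (α := α) (by linarith) hα (by linarith) hα2 (by linarith)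
    refine ⟨β, by linarith, ρ ^ (N - α + β - b) * C, by positivity, fun x hx => ?_⟩
    have hx0 : x ≠ 0 := norm_pos_iff.1 (hρ.trans hx)
    have := h x hx0
    rw [show (N:ℝ) - (N - α + β) - α = -β by ring] at this
    rw [mul_assoc, ENNReal.ofReal_mul (by positivity)]
    refine le_trans ?_ (mul_le_mul_right this _)
    rw [← lintegral_const_mul _ (by fun_prop)]
    refine (setLIntegral_mono (by fun_prop) ?_).trans (setLIntegral_le_lintegral _ _)
    intro y hy
    have hy : ρ < ‖y‖ := hy
    have hy0 : 0 < ‖y‖ := hρ.trans hy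
    rw [← ENNReal.ofReal_mul (by positivity), ← mul_assoc]
    refine ENNReal.ofReal_le_ofReal ?_
    gcongr
    rw [show -b = (N - α + β - b) + -(N - α + β) by ring, Real.rpow_add hy0]
    gcongr ?_ * _
    exact Real.rpow_le_rpow_of_nonpos hρ hy.le (by linarith)

end
end

open MeasureTheory Real Set
open scoped ENNReal NNReal
noncomputable section
section
variable {N : ℕ} {Ω : Set (Euc N)} {lam1 : ℝ} {φ : Euc N → ℝ}

theorem closure_coneGT_sub {ρ : ℝ} (hρ : 0 < ρ) {x : Euc N} (hx : x ∈ closure (coneGT N ρ Ω)) :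
    ρ ≤ ‖x‖ ∧ ‖x‖⁻¹ • x ∈ closure Ω := by
  have h1 : ρ ≤ ‖x‖ := by
    have : closure (coneGT N ρ Ω) ⊆ {x | ρ ≤ ‖x‖} :=
      closure_minimal (fun y hy => hy.1.le) (isClosed_le continuous_const continuous_norm)
    exact this hx
  refine ⟨h1, ?_⟩
  have h0 : ‖x‖ ≠ 0 := (hρ.trans_le h1).ne'
  have hc : ContinuousAt (fun x : Euc N => ‖x‖⁻¹ • x) x :=
    ContinuousAt.smul (continuous_norm.continuousAt.inv₀ h0) continuousAt_id
  have := hc.continuousWithinAt.mem_closure_image hx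
  refine closure_mono ?_ this
  rintro _ ⟨y, hy, rfl⟩
  exact hy.2

theorem rpowPhi_contOn_closure (hphi : DirichletEigenpair N Ω lam1 φ) {ρ : ℝ} (hρ : 0 < ρ) (a : ℝ) :
    ContinuousOn (fun y : Euc N => ‖y‖ ^ a * bigPhi φ y) (closure (coneGT N ρ Ω)) := by
  refine ContinuousOn.mul ?_ ?_
  · refine continuous_norm.continuousOn.rpow_const ?_
    intro x hx
    exact Or.inl (hρ.trans_le (closure_coneGT_sub hρ hx).1).ne'
  · refine hphi.contOn.comp (f := fun x : Euc N => ‖x‖⁻¹ • x) ?_ (fun x hx => (closure_coneGT_sub hρ hx).2)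
    intro x hx
    have h0 : ‖x‖ ≠ 0 := (hρ.trans_le (closure_coneGT_sub hρ hx).1).ne'
    exact (ContinuousAt.smul (continuous_norm.continuousAt.inv₀ h0) continuousAt_id).continuousWithinAt

theorem sufficiency (hN : 2 ≤ N) (hΩ : IsConeDomain N Ω) (hphi : DirichletEigenpair N Ω lam1 φ)
    {α p q ρ μ g : ℝ} (hα : 0 ≤ α) (hαN : α < N) (hp : 0 < p) (hρ : 0 < ρ) (hg : 0 < g)
    (hgk : g * (g - (N - 2)) = lam1 - μ) (hD : 0 ≤ 2 * g - (N - 2))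
    (hq : max 0 (2 - α) < (q - 1) * g) (h1 : N - α < p * g) (h2 : N - α + 2 < (p + q - 1) * g) :
    ∃ u : Euc N → ℝ, IsPosSolE N ρ μ α p q Ω u := by
  have hq0 : 0 < (q - 1) * g := lt_of_le_of_lt (le_max_left _ _) hq
  have hq1 : 1 < q := by
    have := pos_of_mul_pos_left hq0 hg.le
    linarith
  obtain ⟨β, hβ, C, hC, hconv⟩ := convUp hN (b := p * g) (q' := (q - 1) * g) hρ hα hαN h1 hq
    (by linarith)
  set ε : ℝ := β + (q - 1) * g - 2 with hε
  have hε0 : 0 < ε := by linarith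
  set D : ℝ := 2 * g - (N - 2) with hDdef
  set K : ℝ := ρ ^ ε * (ε * (ε + D)) with hK
  have hK0 : 0 < K := by positivity
  have hpq : 0 < p + q - 1 := by linarith
  set A : ℝ := (K / (C + 1)) ^ (1 / (p + q - 1)) with hA
  have hA0 : 0 < A := by positivity
  have hAK : A ^ (p + q - 1) * C ≤ K := by
    rw [hA, ← Real.rpow_mul (by positivity), one_div_mul_cancel hpq.ne', Real.rpow_one,
      div_mul_eq_mul_div, div_le_iff₀ (by positivity)]
    nlinarith
  set w : ℝ → Euc N → ℝ := fun a y => ‖y‖ ^ a * bigPhi φ y with hw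
  set u : Euc N → ℝ := fun y => A * w (-g) y + (-(A * ρ ^ ε)) * w (-g - ε) y with hu
  have hwc : ∀ a, ∀ x ∈ coneGT N ρ Ω, ContDiffAt ℝ 2 (w a) x := fun a x hx =>
    rpowPhi_contDiffAt hΩ hphi (coneGT_sub hρ hx) a
  have hform : ∀ x ∈ coneGT N ρ Ω, u x = A * (‖x‖ ^ (-g) * bigPhi φ x) * (1 - (ρ / ‖x‖) ^ ε) := by
    intro x hx
    have hx0 : 0 < ‖x‖ := hρ.trans hx.1
    simp only [hu, hw]
    rw [Real.div_rpow hρ.le hx0.le, sub_eq_add_neg (-g), Real.rpow_add hx0, Real.rpow_neg hx0.le ε]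
    field_simp
    ring
  have hupos : ∀ x ∈ coneGT N ρ Ω, 0 < u x := by
    intro x hx
    have hx0 : 0 < ‖x‖ := hρ.trans hx.1
    have hP := bigPhi_pos hphi (coneGT_sub hρ hx)
    rw [hform x hx]
    have : (ρ / ‖x‖) ^ ε < 1 := Real.rpow_lt_one (by positivity) ((div_lt_one hx0).2 hx.1) hε0
    have : 0 < 1 - (ρ / ‖x‖) ^ ε := by linarith
    positivity
  have hule : ∀ x ∈ coneGT N ρ Ω, u x ≤ A * (‖x‖ ^ (-g) * bigPhi φ x) := by
    intro x hx
    have hx0 : 0 < ‖x‖ := hρ.trans hx.1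
    have hP := bigPhi_pos hphi (coneGT_sub hρ hx)
    rw [hform x hx]
    have : 0 ≤ (ρ / ‖x‖) ^ ε := by positivity
    exact mul_le_of_le_one_right (by positivity) (by linarith)
  have hrc : ∀ x ∈ coneGT N ρ Ω, rieszConv N α ρ Ω (fun y => u y ^ p) x ≤
      ENNReal.ofReal (A ^ p * (C * ‖x‖ ^ (-β))) := by
    intro x hx
    rw [ENNReal.ofReal_mul (by positivity)]
    refine le_trans ?_ (mul_le_mul_right (hconv x hx.1) _)
    rw [← lintegral_const_mul _ (by fun_prop)]
    unfold rieszConv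
    refine (setLIntegral_mono (by fun_prop) ?_).trans
      (lintegral_mono_set (fun y (hy : y ∈ coneGT N ρ Ω) => hy.1))
    intro y hy
    have hy0 : 0 < ‖y‖ := hρ.trans hy.1
    have hP := bigPhi_pos hphi (coneGT_sub hρ hy)
    have hP1 := bigPhi_le hphi (coneGT_sub hρ hy)
    rw [← ENNReal.ofReal_mul (by positivity), ← mul_assoc]
    refine ENNReal.ofReal_le_ofReal ?_
    gcongr
    calc u y ^ p ≤ (A * ‖y‖ ^ (-g)) ^ p := by
          refine Real.rpow_le_rpow (hupos y hy).le ((hule y hy).trans ?_) hp.le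
          gcongr
          exact mul_le_of_le_one_right (by positivity) hP1
      _ = _ := by
          rw [Real.mul_rpow hA0.le (by positivity), ← Real.rpow_mul hy0.le]
          congr 2; ring
  refine ⟨u, ?_, ?_, hupos, fun x hx => (hrc x hx).trans_lt ENNReal.ofReal_lt_top, ?_⟩
  · intro x hx
    exact ((contDiffAt_const.mul (hwc _ x hx)).add
      (contDiffAt_const.mul (hwc _ x hx))).contDiffWithinAt
  · exact (continuousOn_const.mul (rpowPhi_contOn_closure hphi hρ _)).add
      (continuousOn_const.mul (rpowPhi_contOn_closure hphi hρ _))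
  · intro x hx
    have hx0 : 0 < ‖x‖ := hρ.trans hx.1
    have hxc := coneGT_sub hρ hx
    have hP := bigPhi_pos hphi hxc
    have hP1 := bigPhi_le hphi hxc
    have hlap : lap N u x = A * lap N (w (-g)) x + (-(A * ρ ^ ε)) * lap N (w (-g - ε)) x := by
      rw [← lap_const_mul (hwc _ x hx), ← lap_const_mul (hwc _ x hx)]
      exact lap_add (contDiffAt_const.mul (hwc _ x hx)) (contDiffAt_const.mul (hwc _ x hx))
    have hR : -lap N u x - μ * ‖x‖ ^ (-(2:ℝ)) * u x = A * K * ‖x‖ ^ (-g - ε - 2) * bigPhi φ x := by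
      rw [hardy_conv, hlap]
      simp only [hw, hu]
      rw [lap_rpowPhi hΩ hphi hxc, lap_rpowPhi hΩ hphi hxc,
        show -g * (-g + ((N:ℝ) - 2)) - lam1 = -μ by linarith,
        show (-g - ε) * (-g - ε + ((N:ℝ) - 2)) - lam1 = -μ + ε * (ε + D) by
          rw [hDdef]; linarith,
        show -g - ε - 2 = (-g - ε) - (2:ℕ) by norm_num, Real.rpow_sub_natCast hx0.ne', hK]
      field_simp
      ring
    rw [hR]
    have t1 : (rieszConv N α ρ Ω (fun y => u y ^ p) x).toReal ≤ A ^ p * (C * ‖x‖ ^ (-β)) :=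
      ENNReal.toReal_le_of_le_ofReal (by positivity) (hrc x hx)
    have t2 : u x ^ q ≤ A ^ q * (‖x‖ ^ (-g * q) * bigPhi φ x) := by
      calc u x ^ q ≤ (A * (‖x‖ ^ (-g) * bigPhi φ x)) ^ q :=
            Real.rpow_le_rpow (hupos x hx).le (hule x hx) (by linarith)
        _ = A ^ q * (‖x‖ ^ (-g * q) * bigPhi φ x ^ q) := by
            rw [Real.mul_rpow hA0.le (by positivity), Real.mul_rpow (by positivity) hP.le,
              ← Real.rpow_mul hx0.le]
        _ ≤ _ := by
            gcongr
            exact Real.rpow_le_self_of_le_one hP.le hP1 hq1.le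
    calc _ ≤ (A ^ p * (C * ‖x‖ ^ (-β))) * (A ^ q * (‖x‖ ^ (-g * q) * bigPhi φ x)) := by
          have := (hupos x hx).le
          gcongr
      _ = A * (A ^ (p + q - 1) * C) * ‖x‖ ^ (-g - ε - 2) * bigPhi φ x := by
          rw [show -g - ε - 2 = -β + -g * q by rw [hε]; ring, Real.rpow_add hx0,
            show p + q - 1 = (p + q) - (1:ℕ) by norm_num, Real.rpow_sub_natCast hA0.ne', Real.rpow_add hA0]
          field_simp
      _ ≤ _ := by gcongr

end
end


/-- for `μ ≤ C_{H,Ω}` and `(q-1)·|γ_*| > max{0, 2-α}`, the inequality `(E)` has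
a positive solution in `C_Ω^ρ` iff `p·|γ_*| > N - α` and `(p+q-1)·|γ_*| > N - α + 2`. -/
theorem existence_iff_supercritical
    (N : ℕ) (hN : 2 ≤ N) (Ω : Set (Euc N)) (hΩ : IsConeDomain N Ω)
    (lam1 : ℝ) (φ : Euc N → ℝ) (hphi : DirichletEigenpair N Ω lam1 φ)
    (α p q ρ μ : ℝ) (hα : 0 ≤ α) (hαN : α < N) (hp : 0 < p) (hρ : 0 < ρ)
    (hμ : μ ≤ CHconst N lam1)
    (hq : max 0 (2 - α) < (q - 1) * (-(gammaStar N lam1 μ))) :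
    (∃ u : Euc N → ℝ, IsPosSolE N ρ μ α p q Ω u) ↔
      ((N : ℝ) - α < p * (-(gammaStar N lam1 μ)) ∧
        (N : ℝ) - α + 2 < (p + q - 1) * (-(gammaStar N lam1 μ))) := by
  set g : ℝ := -(gammaStar N lam1 μ) with hgdef
  set S : ℝ := Real.sqrt (((N : ℝ) - 2) ^ 2 + 4 * (lam1 - μ)) with hS
  have hS0 : 0 ≤ S := Real.sqrt_nonneg _
  have hdisc : 0 ≤ ((N : ℝ) - 2) ^ 2 + 4 * (lam1 - μ) := by
    unfold CHconst at hμ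
    nlinarith
  have hSS : S * S = ((N : ℝ) - 2) ^ 2 + 4 * (lam1 - μ) := Real.mul_self_sqrt hdisc
  have hge : g = (((N : ℝ) - 2) + S) / 2 := by
    rw [hgdef, gammaStar, ← hS]; ring
  have hN2 : (2 : ℝ) ≤ N := by exact_mod_cast hN
  have hg0 : 0 ≤ g := by rw [hge]; linarith
  have hq0 : 0 < (q - 1) * g := lt_of_le_of_lt (le_max_left _ _) hq
  have hg : 0 < g := by
    rcases hg0.eq_or_lt with h | h
    · rw [← h] at hq0; simp at hq0
    · exact h
  have hq1 : 1 < q := by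
    have := pos_of_mul_pos_left hq0 hg.le
    linarith
  have hgk : g * (g - (N - 2)) = lam1 - μ := by rw [hge]; nlinarith
  have hD : 0 ≤ 2 * g - (N - 2) := by rw [hge]; linarith
  constructor
  · rintro ⟨u, hu⟩
    exact necessity hΩ hphi hρ hα hg hgk hD hp hq1 hu
  · rintro ⟨h1, h2⟩
    exact sufficiency hN hΩ hphi hα hαN hp hρ hg hgk hD hq h1 h2
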